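/- Let G be a finite abelian group with exp(G) = n odd and r(G) ≥ n − 1, and let G₀ ⊆ G be a minimal non-half-factorial LCN-set with min Δ(G₀) = max Δ*(G). Then there exists g ∈ G₀ such that G₀ \ {g} is independent. -/

import Mathlib

open Multiset

section Defs

variable {G : Type*} [AddCommGroup G]

/-- `S` is a zero-sum sequence over `G₀`: a multiset with entries in `G₀` and sum `0`. -/
def IsZeroSumSeq (G₀ : Set G) (S : Multiset G) : Prop :=
  (∀ x ∈ S, x ∈ G₀) ∧ S.sum = 0

/-- `S` is an atom over `G₀`: a nonempty zero-sum sequence over `G₀` that is not the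
union of two nonempty zero-sum sequences over `G₀`. -/
def IsAtomSeq (G₀ : Set G) (S : Multiset G) : Prop :=
  IsZeroSumSeq G₀ S ∧ S ≠ 0 ∧
    ∀ A B : Multiset G, IsZeroSumSeq G₀ A → IsZeroSumSeq G₀ B →
      A ≠ 0 → B ≠ 0 → S ≠ A + B

/-- The set of lengths of `B`: all `k` such that `B` is a union of `k` atoms over `G₀`. -/
def LengthSet (G₀ : Set G) (B : Multiset G) : Set ℕ :=
  {k | ∃ l : Multiset (Multiset G), Multiset.card l = k ∧
      (∀ A ∈ l, IsAtomSeq G₀ A) ∧ l.sum = B}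

/-- The set of successive distances of a set of naturals. -/
def DeltaOf (L : Set ℕ) : Set ℕ :=
  {d | ∃ x ∈ L, ∃ y ∈ L, x < y ∧ y - x = d ∧ ∀ z ∈ L, ¬(x < z ∧ z < y)}

/-- The set of distances `Δ(G₀)`. -/
def DeltaSet (G₀ : Set G) : Set ℕ :=
  {d | ∃ B : Multiset G, IsZeroSumSeq G₀ B ∧ B ≠ 0 ∧ d ∈ DeltaOf (LengthSet G₀ B)}

/-- `G₀` is half-factorial if `Δ(G₀) = ∅`. -/
def IsHalfFactorialSet (G₀ : Set G) : Prop := DeltaSet G₀ = ∅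

/-- `G₀` is minimal non-half-factorial if `Δ(G₀) ≠ ∅` and every proper subset is
half-factorial. -/
def IsMinNonHalfFactorial (G₀ : Set G) : Prop :=
  (DeltaSet G₀).Nonempty ∧ ∀ G₁ : Set G, G₁ ⊂ G₀ → DeltaSet G₁ = ∅

/-- The cross number `k(S) = Σ 1/ord(g)` of a multiset over `G`. -/
noncomputable def crossNumber (S : Multiset G) : ℚ :=
  (S.map (fun g => ((addOrderOf g : ℚ))⁻¹)).sum

/-- `G₀` is an LCN-set if every atom over `G₀` has cross number at least 1. -/
def IsLCNSet (G₀ : Set G) : Prop :=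
  ∀ U : Multiset G, IsAtomSeq G₀ U → 1 ≤ crossNumber U

/-- A subset of `G \ {0}` is independent if any integral linear relation on its elements
has all summands zero. -/
def IsIndependentSet (E : Set G) : Prop :=
  (0 : G) ∉ E ∧ ∀ s : Finset G, ↑s ⊆ E → ∀ f : G → ℤ,
    (∑ e ∈ s, f e • e) = 0 → ∀ e ∈ s, f e • e = 0

/-- `d` is a greatest common divisor of the set `S` of naturals. -/
def IsSetGcd (S : Set ℕ) (d : ℕ) : Prop :=
  (∀ s ∈ S, d ∣ s) ∧ ∀ e : ℕ, (∀ s ∈ S, e ∣ s) → e ∣ d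

end Defs

/-- The set of minimal distances `Δ*(G)`. -/
def DeltaStar (G : Type*) [AddCommGroup G] : Set ℕ :=
  {d | ∃ G₀ : Set G, (DeltaSet G₀).Nonempty ∧ d = sInf (DeltaSet G₀)}

/-- The `p`-rank of a finite abelian group: `log_p` of the order of the `p`-torsion
subgroup `{x | p • x = 0}`. -/
noncomputable def pRank (G : Type*) [AddCommGroup G] (p : ℕ) : ℕ :=
  Nat.log p (Nat.card {x : G // p • x = 0})

/-- The rank of a finite abelian group: the maximum of the `p`-ranks over all primes. -/
noncomputable def rankG (G : Type*) [AddCommGroup G] : ℕ :=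
  sSup {r : ℕ | ∃ p : ℕ, p.Prime ∧ r = pRank G p}


set_option linter.unusedSectionVars false


section Aux

variable {G : Type*} [AddCommGroup G]

def Om1 (G₀ : Set G) (A : Multiset G) : Prop := IsAtomSeq G₀ A ∧ crossNumber A = 1

def OmG (G₀ : Set G) (A : Multiset G) : Prop := IsAtomSeq G₀ A ∧ 1 < crossNumber A

def Fac1 (G₀ : Set G) (B : Multiset G) : Prop :=
  ∃ l : Multiset (Multiset G), (∀ A ∈ l, Om1 G₀ A) ∧ l.sum = B

structure Good (G₀ : Set G) (d : ℕ) : Prop where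
  gap : ∀ B x y, x ∈ LengthSet G₀ B → y ∈ LengthSet G₀ B → x < y → x + d ≤ y
  lcn : ∀ A, IsAtomSeq G₀ A → 1 ≤ crossNumber A
  prop : ∀ A, IsAtomSeq G₀ A → ∀ g ∈ G₀, g ∉ A → crossNumber A = 1

lemma IsZeroSumSeq.add {G₀ : Set G} {A B : Multiset G} (hA : IsZeroSumSeq G₀ A)
    (hB : IsZeroSumSeq G₀ B) : IsZeroSumSeq G₀ (A + B) := by
  refine ⟨fun x hx => ?_, by rw [Multiset.sum_add, hA.2, hB.2, add_zero]⟩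
  rcases Multiset.mem_add.1 hx with h | h
  · exact hA.1 x h
  · exact hB.1 x h

lemma IsZeroSumSeq.zero (G₀ : Set G) : IsZeroSumSeq G₀ (0 : Multiset G) :=
  ⟨fun x hx => by simp at hx, by simp⟩

lemma IsZeroSumSeq.of_add_left {G₀ : Set G} {A B : Multiset G} (hA : IsZeroSumSeq G₀ A)
    (hB : IsZeroSumSeq G₀ (A + B)) : IsZeroSumSeq G₀ B := by
  refine ⟨fun x hx => hB.1 x (Multiset.mem_add.2 (Or.inr hx)), ?_⟩
  have h := hB.2
  rw [Multiset.sum_add, hA.2, zero_add] at h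
  exact h

lemma isZeroSumSeq_sum {G₀ : Set G} {l : Multiset (Multiset G)}
    (h : ∀ A ∈ l, IsZeroSumSeq G₀ A) : IsZeroSumSeq G₀ l.sum := by
  induction l using Multiset.induction_on with
  | empty => simpa using IsZeroSumSeq.zero G₀
  | cons a s ih =>
    rw [Multiset.sum_cons]
    exact (h a (by simp)).add (ih fun A hA => h A (by simp [hA]))

lemma IsAtomSeq.eq_of_le {G₀ : Set G} {A B : Multiset G} (hA : IsAtomSeq G₀ A)
    (hB : B.sum = 0) (h0 : B ≠ 0) (hle : B ≤ A) : B = A := by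
  obtain ⟨C, rfl⟩ := Multiset.le_iff_exists_add.1 hle
  have hB' : IsZeroSumSeq G₀ B :=
    ⟨fun x hx => hA.1.1 x (Multiset.mem_add.2 (Or.inl hx)), hB⟩
  have hC := hB'.of_add_left hA.1
  by_contra hne
  have hC0 : C ≠ 0 := by
    rintro rfl
    exact hne (by simp)
  exact hA.2.2 B C hB' hC h0 hC0 rfl

lemma isAtomSeq_mk {G₀ : Set G} {A : Multiset G} (hA : IsZeroSumSeq G₀ A) (h0 : A ≠ 0)
    (h : ∀ B : Multiset G, B ≤ A → B.sum = 0 → B ≠ 0 → B = A) : IsAtomSeq G₀ A := by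
  refine ⟨hA, h0, ?_⟩
  rintro B C hB hC hB0 hC0 rfl
  have := h B (Multiset.le_add_right _ _) hB.2 hB0
  apply hC0
  exact (add_eq_left.1 this.symm)

lemma IsAtomSeq.change {G₀ G₁ : Set G} {A : Multiset G} (hA : IsAtomSeq G₀ A)
    (h : ∀ x ∈ A, x ∈ G₁) : IsAtomSeq G₁ A :=
  isAtomSeq_mk ⟨h, hA.1.2⟩ hA.2.1 fun _ hB hs h0 => hA.eq_of_le hs h0 hB

lemma exists_fact {G₀ : Set G} (B : Multiset G) (hB : IsZeroSumSeq G₀ B) :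
    ∃ l : Multiset (Multiset G), (∀ A ∈ l, IsAtomSeq G₀ A) ∧ l.sum = B := by
  induction h : Multiset.card B using Nat.strong_induction_on generalizing B with
  | _ n ih =>
    by_cases h0 : B = 0
    · exact ⟨0, by simp, by simp [h0]⟩
    by_cases hat : IsAtomSeq G₀ B
    · exact ⟨{B}, by simpa using hat, by simp⟩
    have : ∃ A C : Multiset G, IsZeroSumSeq G₀ A ∧ IsZeroSumSeq G₀ C ∧ A ≠ 0 ∧ C ≠ 0 ∧
        B = A + C := by
      by_contra hcon
      push Not at hcon
      exact hat ⟨hB, h0, fun A C hA hC hA0 hC0 => hcon A C hA hC hA0 hC0⟩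
    obtain ⟨A, C, hA, hC, hA0, hC0, rfl⟩ := this
    have h1 := Multiset.card_pos.2 hA0
    have h2 := Multiset.card_pos.2 hC0
    rw [Multiset.card_add] at h
    obtain ⟨l1, hl1, hs1⟩ := ih _ (by omega) A hA rfl
    obtain ⟨l2, hl2, hs2⟩ := ih _ (by omega) C hC rfl
    refine ⟨l1 + l2, fun X hX => ?_, by rw [Multiset.sum_add, hs1, hs2]⟩
    rcases Multiset.mem_add.1 hX with h | h
    · exact hl1 X h
    · exact hl2 X h

lemma exists_length {G₀ : Set G} {B : Multiset G} (hB : IsZeroSumSeq G₀ B) :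
    ∃ x, x ∈ LengthSet G₀ B := by
  obtain ⟨l, h1, h2⟩ := exists_fact B hB
  exact ⟨_, l, rfl, h1, h2⟩

lemma LengthSet.add {G₀ : Set G} {B C : Multiset G} {x y : ℕ} (hx : x ∈ LengthSet G₀ B)
    (hy : y ∈ LengthSet G₀ C) : x + y ∈ LengthSet G₀ (B + C) := by
  obtain ⟨l1, c1, h1, s1⟩ := hx
  obtain ⟨l2, c2, h2, s2⟩ := hy
  refine ⟨l1 + l2, by rw [Multiset.card_add, c1, c2], fun X hX => ?_,
    by rw [Multiset.sum_add, s1, s2]⟩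
  rcases Multiset.mem_add.1 hX with h | h
  · exact h1 X h
  · exact h2 X h

lemma IsAtomSeq.one_mem {G₀ : Set G} {A : Multiset G} (hA : IsAtomSeq G₀ A) :
    1 ∈ LengthSet G₀ A := ⟨{A}, by simp, by simpa using hA, by simp⟩

lemma isAtomSeq_of_one_mem {G₀ : Set G} {A : Multiset G} (hA : 1 ∈ LengthSet G₀ A) :
    IsAtomSeq G₀ A := by
  obtain ⟨l, c, h, s⟩ := hA
  obtain ⟨a, rfl⟩ := Multiset.card_eq_one.1 c
  have : a = A := by simpa using s
  subst this
  exact h a (by simp)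

lemma pos_length {G₀ : Set G} {B : Multiset G} {x : ℕ} (hx : x ∈ LengthSet G₀ B)
    (h0 : B ≠ 0) : 1 ≤ x := by
  obtain ⟨l, c, h, s⟩ := hx
  rcases Nat.eq_zero_or_pos x with h' | h'
  · subst h'
    rw [Multiset.card_eq_zero] at c
    subst c
    exact absurd s.symm (by simpa using h0)
  · exact h'

lemma crossNumber_zero : crossNumber (0 : Multiset G) = 0 := by simp [crossNumber]

lemma crossNumber_add (A B : Multiset G) :
    crossNumber (A + B) = crossNumber A + crossNumber B := by simp [crossNumber]

lemma crossNumber_sum_one {l : Multiset (Multiset G)} (h : ∀ A ∈ l, crossNumber A = 1) :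
    crossNumber l.sum = Multiset.card l := by
  induction l using Multiset.induction_on with
  | empty => simp [crossNumber_zero]
  | cons a s ih =>
    rw [Multiset.sum_cons, crossNumber_add, h a (by simp), ih fun A hA => h A (by simp [hA])]
    push_cast [Multiset.card_cons]
    ring

lemma crossNumber_sum_ge {l : Multiset (Multiset G)} (h : ∀ A ∈ l, 1 ≤ crossNumber A) :
    (Multiset.card l : ℚ) ≤ crossNumber l.sum := by
  induction l using Multiset.induction_on with
  | empty => simp [crossNumber_zero]
  | cons a s ih =>
    rw [Multiset.sum_cons, crossNumber_add]
    have h1 := h a (by simp)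
    have h2 := ih fun A hA => h A (by simp [hA])
    push_cast [Multiset.card_cons]
    linarith

lemma crossNumber_sum_eq {l : Multiset (Multiset G)} (h : ∀ A ∈ l, 1 ≤ crossNumber A)
    (he : crossNumber l.sum ≤ Multiset.card l) : ∀ A ∈ l, crossNumber A = 1 := by
  classical
  intro A hA
  have h1 := h A hA
  rw [← Multiset.cons_erase hA, Multiset.sum_cons, crossNumber_add, Multiset.card_cons] at he
  have h2 := crossNumber_sum_ge (l := l.erase A) fun X hX => h X (Multiset.mem_of_mem_erase hX)
  push_cast at he
  linarith

lemma Fac1.add {G₀ : Set G} {B C : Multiset G} (hB : Fac1 G₀ B) (hC : Fac1 G₀ C) :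
    Fac1 G₀ (B + C) := by
  obtain ⟨l1, h1, s1⟩ := hB
  obtain ⟨l2, h2, s2⟩ := hC
  refine ⟨l1 + l2, fun X hX => ?_, by rw [Multiset.sum_add, s1, s2]⟩
  rcases Multiset.mem_add.1 hX with h | h
  · exact h1 X h
  · exact h2 X h

lemma Fac1.zero (G₀ : Set G) : Fac1 G₀ (0 : Multiset G) := ⟨0, by simp, by simp⟩

lemma Om1.fac1 {G₀ : Set G} {A : Multiset G} (hA : Om1 G₀ A) : Fac1 G₀ A :=
  ⟨{A}, by simpa using hA, by simp⟩

lemma Fac1.zs {G₀ : Set G} {A : Multiset G} (hA : Fac1 G₀ A) : IsZeroSumSeq G₀ A := by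
  obtain ⟨l, h, rfl⟩ := hA
  exact isZeroSumSeq_sum fun A hA => (h A hA).1.1

lemma OmG.not_fac1 {G₀ : Set G} {U : Multiset G} (hU : OmG G₀ U) : ¬ Fac1 G₀ U := by
  rintro ⟨l, h, s⟩
  have hl : l ≠ 0 := by
    rintro rfl
    exact hU.1.2.1 (by simpa using s.symm)
  obtain ⟨A, hA⟩ := Multiset.exists_mem_of_ne_zero hl
  have hle : A ≤ U := by rw [← s]; exact Multiset.single_le_sum (by simp) A hA
  have := hU.1.eq_of_le (h A hA).1.1.2 (h A hA).1.2.1 hle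
  have h1 := (h A hA).2
  rw [this] at h1
  have := hU.2
  linarith

namespace Good

variable {G₀ : Set G} {d : ℕ}

lemma length_lt (hG : Good G₀ d) {B : Multiset G} (hB : ¬ Fac1 G₀ B) {x : ℕ}
    (hx : x ∈ LengthSet G₀ B) : (x : ℚ) < crossNumber B := by
  obtain ⟨l, c, h, s⟩ := hx
  by_contra hcon
  push Not at hcon
  have := crossNumber_sum_eq (l := l) (fun A hA => hG.lcn A (h A hA)) (by rw [s, c]; exact hcon)
  exact hB ⟨l, fun A hA => ⟨h A hA, this A hA⟩, s⟩

lemma fac1_of_missing (hG : Good G₀ d) {B : Multiset G} (hB : IsZeroSumSeq G₀ B) {g : G}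
    (hg : g ∈ G₀) (hgB : g ∉ B) : Fac1 G₀ B := by
  obtain ⟨l, h, s⟩ := exists_fact B hB
  refine ⟨l, fun A hA => ⟨h A hA, hG.prop A (h A hA) g hg fun hgA => hgB ?_⟩, s⟩
  rw [← s]
  exact Multiset.mem_of_le (Multiset.single_le_sum (by simp) A hA) hgA

lemma full (hG : Good G₀ d) {U : Multiset G} (hU : OmG G₀ U) {g : G} (hg : g ∈ G₀) : g ∈ U := by
  by_contra h
  have := hG.prop U hU.1 g hg h
  have := hU.2
  linarith

lemma omG_of_atom (hG : Good G₀ d) {U : Multiset G} (hU : IsAtomSeq G₀ U) (h : ¬ Fac1 G₀ U) :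
    OmG G₀ U := ⟨hU, lt_of_le_of_ne (hG.lcn U hU) fun he => h (Om1.fac1 ⟨hU, he.symm⟩)⟩

end Good

end Aux

section Aux2

variable {G : Type*} [AddCommGroup G] [Fintype G] [DecidableEq G]

/-- The trivial atom `g^{ord g}`. -/
noncomputable def triv (g : G) : Multiset G := Multiset.replicate (addOrderOf g) g


lemma crossNumber_replicate (k : ℕ) (g : G) :
    crossNumber (Multiset.replicate k g) = k * ((addOrderOf g : ℚ))⁻¹ := by
  simp [crossNumber]

lemma triv_cross (g : G) : crossNumber (triv g) = 1 := by
  rw [triv, crossNumber_replicate]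
  have : (addOrderOf g : ℚ) ≠ 0 := by exact_mod_cast (addOrderOf_pos g).ne'
  field_simp

lemma triv_sum (g : G) : (triv g).sum = 0 := by
  rw [triv, Multiset.sum_replicate, addOrderOf_nsmul_eq_zero]

lemma triv_ne (g : G) : triv g ≠ 0 := by
  intro h
  have := congrArg Multiset.card h
  rw [triv, Multiset.card_replicate] at this
  exact (addOrderOf_pos g).ne' this

lemma triv_om1 {G₀ : Set G} {g : G} (hg : g ∈ G₀) : Om1 G₀ (triv g) := by
  refine ⟨isAtomSeq_mk ⟨fun x hx => ?_, triv_sum g⟩ (triv_ne g) ?_, triv_cross g⟩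
  · rw [Multiset.eq_of_mem_replicate hx]; exact hg
  · intro B hB hs h0
    obtain ⟨k, hk, rfl⟩ := Multiset.le_replicate_iff.1 hB
    rw [Multiset.sum_replicate] at hs
    have hk0 : k ≠ 0 := by rintro rfl; exact h0 (by simp)
    have := Nat.le_of_dvd (Nat.pos_of_ne_zero hk0) (addOrderOf_dvd_of_nsmul_eq_zero hs)
    rw [triv, le_antisymm hk this]

lemma count_triv (x g : G) : (triv g).count x = if g = x then addOrderOf g else 0 := by
  rw [triv, Multiset.count_replicate]

lemma triv_le_iff (g : G) (S : Multiset G) : triv g ≤ S ↔ addOrderOf g ≤ S.count g :=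
  Multiset.le_count_iff_replicate_le.symm

lemma atom_count_lt {G₀ : Set G} {A : Multiset G} (hA : IsAtomSeq G₀ A) {g : G}
    (h : A ≠ triv g) : A.count g < addOrderOf g := by
  by_contra hcon
  push Not at hcon
  exact h (hA.eq_of_le (triv_sum g) (triv_ne g) ((triv_le_iff g A).2 hcon)).symm

lemma omG_count_lt {G₀ : Set G} {A : Multiset G} (hA : OmG G₀ A) (g : G) :
    A.count g < addOrderOf g := by
  refine atom_count_lt hA.1 fun h => ?_
  have := hA.2
  rw [h, triv_cross] at this
  exact lt_irrefl _ this

/-- Refinement of two decompositions of a multiset. -/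
lemma refine_sum (l : Multiset (Multiset G)) : ∀ (C W : Multiset G), l.sum = C + W →
    ∃ l2 : Multiset (Multiset G × Multiset G), l2.map (fun p => p.1 + p.2) = l ∧
      (l2.map Prod.fst).sum = C ∧ (l2.map Prod.snd).sum = W := by
  induction l using Multiset.induction_on with
  | empty =>
    intro C W h
    rw [Multiset.sum_zero] at h
    have h' := h.symm
    rw [add_eq_zero] at h'
    exact ⟨0, by simp, by simp [h'.1], by simp [h'.2]⟩
  | cons A s ih =>
    intro C W h
    rw [Multiset.sum_cons] at h
    have hsum : s.sum = (C - A) + (W - (A - C)) := by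
      ext x
      have := congrArg (Multiset.count x) h
      simp only [Multiset.count_add, Multiset.count_sub] at this ⊢
      omega
    obtain ⟨l2, h1, h2, h3⟩ := ih _ _ hsum
    refine ⟨(A - (A - C), A - C) ::ₘ l2, ?_, ?_, ?_⟩
    · rw [Multiset.map_cons, h1]
      congr 1
      ext x
      simp only [Multiset.count_add, Multiset.count_sub]
      omega
    · rw [Multiset.map_cons, Multiset.sum_cons, h2]
      ext x
      have := congrArg (Multiset.count x) h
      simp only [Multiset.count_add, Multiset.count_sub] at this ⊢
      omega
    · rw [Multiset.map_cons, Multiset.sum_cons, h3]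
      ext x
      have := congrArg (Multiset.count x) h
      simp only [Multiset.count_add, Multiset.count_sub] at this ⊢
      omega

lemma card_le_exponent {W : Multiset G} (h : crossNumber W = 1) :
    Multiset.card W ≤ AddMonoid.exponent G := by
  have hn : (0 : ℚ) < AddMonoid.exponent G := by
    exact_mod_cast Nat.pos_of_ne_zero (AddMonoid.exponent_ne_zero_of_finite (G := G))
  have key : ∀ S : Multiset G, (Multiset.card S : ℚ) ≤ AddMonoid.exponent G * crossNumber S := by
    intro S
    induction S using Multiset.induction_on with
    | empty => simp [crossNumber_zero]
    | cons a s ih =>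
      rw [← Multiset.singleton_add, crossNumber_add, mul_add]
      have ha : (1 : ℚ) ≤ AddMonoid.exponent G * crossNumber ({a} : Multiset G) := by
        have h1 : (0 : ℚ) < addOrderOf a := by exact_mod_cast addOrderOf_pos a
        have h2 : (addOrderOf a : ℚ) ≤ AddMonoid.exponent G := by
          exact_mod_cast Nat.le_of_dvd (by exact_mod_cast hn) (AddMonoid.addOrder_dvd_exponent a)
        simp only [crossNumber, Multiset.map_singleton, Multiset.sum_singleton]
        rw [← div_eq_mul_inv, le_div_iff₀ h1]
        linarith
      rw [Multiset.card_add]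
      push_cast
      simp only [Multiset.card_singleton, Nat.cast_one]
      linarith
  have := key W
  rw [h, mul_one] at this
  exact_mod_cast this

lemma chain_step1 {G₀ : Set G} (Ws : Multiset (Multiset G)) : ∀ U : Multiset G,
    IsZeroSumSeq G₀ U → ¬ Fac1 G₀ U → (∀ W ∈ Ws, Om1 G₀ W) → Fac1 G₀ (U + Ws.sum) →
    ∃ R W, IsZeroSumSeq G₀ R ∧ ¬ Fac1 G₀ R ∧ Om1 G₀ W ∧ Fac1 G₀ (R + W) := by
  induction Ws using Multiset.induction_on with
  | empty =>
    intro U _ h _ h'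
    exact absurd (by simpa using h') h
  | cons W s ih =>
    intro U hz hU hW hF
    by_cases h : Fac1 G₀ (U + W)
    · exact ⟨U, W, hz, hU, hW W (by simp), h⟩
    · refine ih (U + W) (hz.add (hW W (by simp)).1.1) h (fun X hX => hW X (by simp [hX])) ?_
      rwa [Multiset.sum_cons, ← add_assoc] at hF

lemma chain_step2 {G₀ : Set G} {W : Multiset G} (k : ℕ) : ∀ (l : Multiset (Multiset G))
    (R : Multiset G), Multiset.card l = k →
    IsZeroSumSeq G₀ R → ¬ Fac1 G₀ R → (∀ A ∈ l, Om1 G₀ A) → l.sum = R + W →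
    ∃ (C : Multiset G) (l' : Multiset (Multiset G)), IsZeroSumSeq G₀ C ∧ ¬ Fac1 G₀ C ∧
      (∀ A ∈ l', Om1 G₀ A) ∧ l'.sum = C + W ∧ ∀ A ∈ l', ¬ A ≤ C := by
  induction k with
  | zero =>
    intro l R hk hR hF hl hs
    rw [Multiset.card_eq_zero] at hk
    subst hk
    exact ⟨R, 0, hR, hF, by simp, hs, by simp⟩
  | succ k ih =>
    intro l R hk hR hF hl hs
    by_cases h : ∀ A ∈ l, ¬ A ≤ R
    · exact ⟨R, l, hR, hF, hl, hs, h⟩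
    push Not at h
    obtain ⟨A, hA, hle⟩ := h
    obtain ⟨R', rfl⟩ := Multiset.le_iff_exists_add.1 hle
    refine ih (l.erase A) R' ?_ ((hl A hA).1.1.of_add_left hR)
      (fun hF' => hF ((hl A hA).fac1.add hF')) (fun X hX => hl X (Multiset.mem_of_mem_erase hX)) ?_
    · rw [Multiset.card_erase_of_mem hA, hk]; rfl
    · rw [← Multiset.cons_erase hA, Multiset.sum_cons, add_assoc] at hs
      exact add_left_cancel hs

namespace Good

variable {G₀ : Set G} {d : ℕ}

lemma chain (hG : Good G₀ d) (hd : AddMonoid.exponent G ≤ d + 2) {U : Multiset G}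
    (hU : OmG G₀ U) {Ws : Multiset (Multiset G)} (hW : ∀ W ∈ Ws, Om1 G₀ W) :
    ¬ Fac1 G₀ (U + Ws.sum) := by
  intro hF
  obtain ⟨R, W, hR, hRF, hW1, l0, hl0, hs0⟩ := chain_step1 Ws U hU.1.1 hU.not_fac1 hW hF
  obtain ⟨C, l, hC, hCF, hl, hs, hnl⟩ := chain_step2 _ l0 R rfl hR hRF hl0 hs0
  obtain ⟨l2, h1, h2, h3⟩ := refine_sum l C W hs
  have hC0 : C ≠ 0 := by rintro rfl; exact hCF (Fac1.zero _)
  obtain ⟨x, hx⟩ := exists_length hC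
  have hx1 := pos_length hx hC0
  have hxlt := hG.length_lt hCF hx
  have hcr : crossNumber C + 1 = Multiset.card l := by
    rw [← crossNumber_sum_one fun A hA => (hl A hA).2, hs, crossNumber_add, hW1.2]
  have hxl : x + 1 < Multiset.card l := by
    have : (x : ℚ) + 1 < Multiset.card l := by linarith
    exact_mod_cast this
  have hgap := hG.gap (C + W) (x + 1) (Multiset.card l) (LengthSet.add hx hW1.1.one_mem)
    ⟨l, rfl, fun A hA => (hl A hA).1, hs⟩ hxl
  have hcW := card_le_exponent hW1.2
  have hcl : Multiset.card l = Multiset.card l2 := by rw [← h1, Multiset.card_map]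
  have hpos : ∀ p ∈ l2, 1 ≤ Multiset.card p.2 := by
    intro p hp
    rw [Nat.one_le_iff_ne_zero, Ne, Multiset.card_eq_zero]
    intro h0
    have hm : p.1 + p.2 ∈ l := by rw [← h1]; exact Multiset.mem_map_of_mem _ hp
    apply hnl _ hm
    rw [h0, add_zero, ← h2]
    exact Multiset.single_le_sum (by simp) _ (Multiset.mem_map_of_mem _ hp)
  have hcardW : Multiset.card W = (l2.map fun p => Multiset.card p.2).sum := by
    rw [← h3]
    clear h3 h2 h1 hcl hpos
    induction l2 using Multiset.induction_on with
    | empty => simp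
    | cons a s ih => simp [ih]
  have hge : ∀ s : Multiset (Multiset G × Multiset G), (∀ p ∈ s, 1 ≤ Multiset.card p.2) →
      Multiset.card s ≤ (s.map fun p => Multiset.card p.2).sum := by
    intro s
    induction s using Multiset.induction_on with
    | empty => simp
    | cons a s ih =>
      intro h
      have := h a (by simp)
      have := ih fun p hp => h p (by simp [hp])
      simp only [Multiset.card_cons, Multiset.map_cons, Multiset.sum_cons]
      omega
  have hgeW := hge l2 hpos
  have hx' : x = 1 := by omega
  have hone : ∀ p ∈ l2, Multiset.card p.2 = 1 := by
    intro p hp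
    have := hpos p hp
    have h4 := hge (l2.erase p) fun q hq => hpos q (Multiset.mem_of_mem_erase hq)
    rw [← Multiset.cons_erase hp] at hcardW hcl
    rw [Multiset.map_cons, Multiset.sum_cons] at hcardW
    rw [Multiset.card_cons] at hcl
    omega
  subst hx'
  have hCat := isAtomSeq_of_one_mem hx
  have hCG := hG.omG_of_atom hCat hCF
  have hall : ∀ p ∈ l2, ∀ y, p.2 = {y} → C.count y ≤ p.1.count y := by
    intro p hp y hy
    by_contra hcon
    push Not at hcon
    have hm : p.1 + p.2 ∈ l := by rw [← h1]; exact Multiset.mem_map_of_mem _ hp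
    apply hnl _ hm
    rw [hy]
    have hle : p.1 ≤ C := by
      rw [← h2]; exact Multiset.single_le_sum (by simp) _ (Multiset.mem_map_of_mem _ hp)
    rw [Multiset.le_iff_count] at hle ⊢
    intro a
    rw [Multiset.count_add, Multiset.count_singleton]
    split_ifs with h
    · subst h; omega
    · simpa using hle a
  have hnodup : W ≤ C := by
    rw [Multiset.le_iff_count]
    intro y
    by_cases hyW : y ∈ W
    swap
    · rw [Multiset.count_eq_zero_of_notMem hyW]; exact Nat.zero_le _
    have hyC : 1 ≤ C.count y := Multiset.one_le_count_iff_mem.2 (hG.full hCG (hW1.1.1.1 y hyW))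
    refine le_trans ?_ hyC
    have key : ∀ s : Multiset (Multiset G × Multiset G), (∀ p ∈ s, p ∈ l2) →
        C.count y * ((s.map Prod.snd).sum.count y) ≤ (s.map Prod.fst).sum.count y := by
      intro s
      induction s using Multiset.induction_on with
      | empty => simp
      | cons a s ih =>
        intro h
        have ha := h a (by simp)
        have ih' := ih fun p hp => h p (by simp [hp])
        simp only [Multiset.map_cons, Multiset.sum_cons, Multiset.count_add]
        rw [mul_add]
        refine add_le_add ?_ ih'
        obtain ⟨b, hb⟩ := Multiset.card_eq_one.1 (hone a ha)
        rw [hb, Multiset.count_singleton]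
        split_ifs with hyb
        · subst hyb
          simpa using hall a ha y hb
        · simp
    have := key l2 fun p hp => hp
    rw [h2, h3] at this
    by_contra hcon
    push Not at hcon
    nlinarith
  have := hCat.eq_of_le hW1.1.1.2 hW1.1.2.1 hnodup
  have h5 := hCG.2
  rw [← this, hW1.2] at h5
  exact lt_irrefl _ h5

/-- A zero-sum sequence in which some multiplicity is divisible by the order is a product of
atoms of cross number one. -/
lemma fac1_of_dvd (hG : Good G₀ d) {S : Multiset G} (hS : IsZeroSumSeq G₀ S) {g : G}
    (hg : g ∈ G₀) (h : addOrderOf g ∣ S.count g) : Fac1 G₀ S := by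
  obtain ⟨t, ht⟩ := h
  have hdec : (t • triv g) + S.filter (· ≠ g) = S := by
    ext x
    rw [Multiset.count_add, Multiset.count_nsmul, count_triv, Multiset.count_filter]
    by_cases hx : g = x
    · subst hx; simp [ht, mul_comm]
    · simp [hx, Ne.symm hx]
  have hF : Fac1 G₀ (t • triv g) := by
    refine ⟨Multiset.replicate t (triv g), fun A hA => ?_, by rw [Multiset.sum_replicate]⟩
    rw [Multiset.eq_of_mem_replicate hA]
    exact triv_om1 hg
  rw [← hdec]
  refine hF.add (hG.fac1_of_missing (hF.zs.of_add_left (by rwa [hdec])) hg ?_)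
  simp

end Good

end Aux2

section Aux3

variable {G : Type*} [AddCommGroup G] [Fintype G] [DecidableEq G]

/-- Multiplicity vector of a sequence. -/
def vec (S : Multiset G) : G → ℤ := fun g => (S.count g : ℤ)

/-- The sequence with given multiplicities. -/
def mkSeq (c : G → ℕ) : Multiset G := ∑ x, Multiset.replicate (c x) x

/-- Lattice of relations over `G₀`. -/
def Lam (G₀ : Set G) : AddSubgroup (G → ℤ) where
  carrier := {f | (∀ x, x ∉ G₀ → f x = 0) ∧ ∑ x, f x • x = 0}
  zero_mem' := ⟨fun _ _ => rfl, by simp⟩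
  add_mem' := by
    rintro a b ⟨ha, ha'⟩ ⟨hb, hb'⟩
    exact ⟨fun x hx => by simp [ha x hx, hb x hx], by
      simp [add_smul, Finset.sum_add_distrib, ha', hb']⟩
  neg_mem' := by
    rintro a ⟨ha, ha'⟩
    exact ⟨fun x hx => by simp [ha x hx], by simp [ha']⟩

/-- Lattice generated by the atoms of cross number one. -/
def Lam1 (G₀ : Set G) : AddSubgroup (G → ℤ) :=
  AddSubgroup.closure {f | ∃ A, Om1 G₀ A ∧ vec A = f}

lemma vec_add (A B : Multiset G) : vec (A + B) = vec A + vec B := by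
  ext x; simp [vec]

lemma vec_zero : vec (0 : Multiset G) = 0 := by
  ext x; simp [vec]

lemma vec_nsmul (k : ℕ) (A : Multiset G) : vec (k • A) = k • vec A := by
  ext x; simp [vec]

lemma count_mkSeq (c : G → ℕ) (y : G) : (mkSeq c).count y = c y := by
  simp [mkSeq, Multiset.count_sum', Multiset.count_replicate]

lemma seq_sum_eq (S : Multiset G) : S.sum = ∑ x, S.count x • x := by
  exact Finset.sum_multiset_count_of_subset S Finset.univ (fun x _ => Finset.mem_univ x)

lemma vec_mem_lam {G₀ : Set G} {S : Multiset G} (hS : IsZeroSumSeq G₀ S) : vec S ∈ Lam G₀ := by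
  refine ⟨fun x hx => ?_, ?_⟩
  · simp only [vec]
    rw [Multiset.count_eq_zero_of_notMem fun h => hx (hS.1 x h)]; rfl
  · rw [← hS.2, seq_sum_eq S]
    simp [vec]

lemma Om1.vec_mem {G₀ : Set G} {A : Multiset G} (hA : Om1 G₀ A) : vec A ∈ Lam1 G₀ :=
  AddSubgroup.subset_closure ⟨A, hA, rfl⟩

lemma Fac1.vec_mem {G₀ : Set G} {S : Multiset G} (hS : Fac1 G₀ S) : vec S ∈ Lam1 G₀ := by
  obtain ⟨l, h, rfl⟩ := hS
  induction l using Multiset.induction_on with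
  | empty => rw [Multiset.sum_zero, vec_zero]; exact zero_mem _
  | cons a s ih =>
    rw [Multiset.sum_cons, vec_add]
    exact add_mem (h a (by simp)).vec_mem (ih fun A hA => h A (by simp [hA]))

lemma lam1_le_lam (G₀ : Set G) : Lam1 G₀ ≤ Lam G₀ := by
  rw [Lam1, AddSubgroup.closure_le]
  rintro f ⟨A, hA, rfl⟩
  exact vec_mem_lam hA.1.1

lemma lam1_approx {G₀ : Set G} {f : G → ℤ} (hf : f ∈ Lam1 G₀) :
    ∃ Ws : Multiset (Multiset G), (∀ W ∈ Ws, Om1 G₀ W) ∧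
      ∀ g, (AddMonoid.exponent G : ℤ) ∣ (Ws.sum.count g : ℤ) - f g := by
  induction hf using AddSubgroup.closure_induction with
  | mem x hx =>
    obtain ⟨A, hA, rfl⟩ := hx
    exact ⟨{A}, by simpa using hA, fun g => by simp [vec]⟩
  | zero => exact ⟨0, by simp, fun g => by simp⟩
  | add x y _ _ hx hy =>
    obtain ⟨l1, h1, d1⟩ := hx
    obtain ⟨l2, h2, d2⟩ := hy
    refine ⟨l1 + l2, fun X hX => ?_, fun g => ?_⟩
    · rcases Multiset.mem_add.1 hX with h | h
      · exact h1 X h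
      · exact h2 X h
    · have := dvd_add (d1 g) (d2 g)
      rw [Multiset.sum_add, Multiset.count_add]
      push_cast
      simp only [Pi.add_apply]
      have e : (l1.sum.count g : ℤ) + l2.sum.count g - (x g + y g) =
          (l1.sum.count g - x g) + (l2.sum.count g - y g) := by ring
      rw [e]
      exact this
  | neg x _ hx =>
    obtain ⟨l1, h1, d1⟩ := hx
    obtain ⟨k, hk⟩ := Nat.exists_eq_succ_of_ne_zero
      (AddMonoid.exponent_ne_zero_of_finite (G := G))
    refine ⟨k • l1, fun X hX => h1 X (Multiset.mem_of_mem_nsmul hX), fun g => ?_⟩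
    have h3 : (k • l1).sum = k • l1.sum := by rw [Multiset.sum_nsmul]
    rw [h3, Multiset.count_nsmul]
    have h4 := dvd_sub (dvd_mul_right (AddMonoid.exponent G : ℤ) (l1.sum.count g : ℤ)) (d1 g)
    simp only [Pi.neg_apply]
    have e : ((k * l1.sum.count g : ℕ) : ℤ) - -x g =
        (AddMonoid.exponent G : ℤ) * (l1.sum.count g : ℤ) - (l1.sum.count g - x g) := by
      rw [hk]
      push_cast
      ring
    rw [e]
    exact h4

lemma lam1_of_dvd {G₀ : Set G} {f : G → ℤ} (h0 : ∀ x, x ∉ G₀ → f x = 0)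
    (hd : ∀ x, (addOrderOf x : ℤ) ∣ f x) : f ∈ Lam1 G₀ := by
  have hf : f = ∑ x, (f x / addOrderOf x) • vec (triv x) := by
    ext y
    rw [Finset.sum_apply]
    simp only [Pi.smul_apply, vec, count_triv, smul_eq_mul]
    rw [Finset.sum_eq_single y]
    · simp [Int.ediv_mul_cancel (hd y)]
    · intro b _ hb; simp [hb]
    · simp
  rw [hf]
  refine sum_mem fun x _ => ?_
  by_cases hx : x ∈ G₀
  · exact zsmul_mem (triv_om1 hx).vec_mem _
  · rw [h0 x hx]; simp

lemma exponent_smul_mem {G₀ : Set G} {f : G → ℤ} (hf : f ∈ Lam G₀) :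
    AddMonoid.exponent G • f ∈ Lam1 G₀ := by
  refine lam1_of_dvd (fun x hx => by simp [hf.1 x hx]) fun x => ?_
  simp only [Pi.smul_apply, nsmul_eq_mul]
  exact Dvd.dvd.mul_right (by exact_mod_cast AddMonoid.addOrder_dvd_exponent x) _

namespace Good

variable {G₀ : Set G} {d : ℕ}

lemma ker_mem (hG : Good G₀ d) {f : G → ℤ} (hf : f ∈ Lam G₀) {g : G} (hg : g ∈ G₀)
    (hfg : f g = 0) : f ∈ Lam1 G₀ := by
  have hn : (0 : ℤ) < AddMonoid.exponent G := by
    exact_mod_cast Nat.pos_of_ne_zero (AddMonoid.exponent_ne_zero_of_finite (G := G))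
  set S := mkSeq fun x => (f x % AddMonoid.exponent G).toNat with hS
  have hc : ∀ x, (S.count x : ℤ) = f x % AddMonoid.exponent G := by
    intro x
    rw [hS, count_mkSeq, Int.toNat_of_nonneg (Int.emod_nonneg _ hn.ne')]
  have hdiff : ∀ x, (addOrderOf x : ℤ) ∣ f x - S.count x := by
    intro x
    rw [hc]
    exact (show (addOrderOf x : ℤ) ∣ AddMonoid.exponent G by
      exact_mod_cast AddMonoid.addOrder_dvd_exponent x).trans (Int.dvd_self_sub_emod)
  have hzs : IsZeroSumSeq G₀ S := by
    refine ⟨fun x hx => ?_, ?_⟩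
    · by_contra h
      have h1 := hc x
      rw [hf.1 x h] at h1
      have := Multiset.count_pos.2 hx
      simp at h1
      exact h1 hx
    · rw [seq_sum_eq, ← hf.2]
      refine Finset.sum_congr rfl fun x _ => ?_
      have := addOrderOf_dvd_iff_zsmul_eq_zero.1 (hdiff x)
      rw [sub_smul, sub_eq_zero] at this
      rw [this, natCast_zsmul]
  have hF : Fac1 G₀ S := by
    refine hG.fac1_of_missing hzs hg fun h => ?_
    have h1 := hc g
    rw [hfg] at h1
    simp at h1
    exact h1 h
  have h2 : f - vec S ∈ Lam1 G₀ := by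
    refine lam1_of_dvd (fun x hx => ?_) fun x => hdiff x
    simp only [Pi.sub_apply, vec]
    rw [hf.1 x hx, Multiset.count_eq_zero_of_notMem fun h => hx (hzs.1 x h)]; rfl
  have := add_mem h2 hF.vec_mem
  simpa using this

lemma vec_notMem (hG : Good G₀ d) (hd : AddMonoid.exponent G ≤ d + 2) {U : Multiset G}
    (hU : OmG G₀ U) : vec U ∉ Lam1 G₀ := by
  intro h
  obtain ⟨Ws, hW, hdv⟩ := lam1_approx (neg_mem h)
  obtain ⟨g, hgU⟩ := Multiset.exists_mem_of_ne_zero hU.1.2.1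
  have hg := hU.1.1.1 g hgU
  refine hG.chain hd hU hW (hG.fac1_of_dvd (g := g)
    (hU.1.1.add (isZeroSumSeq_sum fun A hA => (hW A hA).1.1)) hg ?_)
  have h1 := hdv g
  have h2 : (addOrderOf g : ℤ) ∣ AddMonoid.exponent G := by
    exact_mod_cast AddMonoid.addOrder_dvd_exponent g
  have h3 := h2.trans h1
  simp only [Pi.neg_apply, vec, sub_neg_eq_add] at h3
  rw [Multiset.count_add, add_comm]
  exact_mod_cast h3

end Good

end Aux3

section Aux4

variable {G : Type*} [AddCommGroup G] [Fintype G] [DecidableEq G]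

lemma exists_coord_gen (L : AddSubgroup (G → ℤ)) (g : G) :
    ∃ δ : ℤ, (∃ f ∈ L, f g = δ) ∧ ∀ f ∈ L, δ ∣ f g := by
  obtain ⟨a, ha⟩ := Int.subgroup_cyclic (L.map (Pi.evalAddMonoidHom (fun _ : G => ℤ) g))
  rw [← AddSubgroup.zmultiples_eq_closure] at ha
  refine ⟨a, ?_, fun f hf => ?_⟩
  · have : a ∈ L.map (Pi.evalAddMonoidHom (fun _ : G => ℤ) g) := by
      rw [ha]; exact AddSubgroup.mem_zmultiples a
    obtain ⟨f, hf, h⟩ := this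
    exact ⟨f, hf, h⟩
  · have : f g ∈ L.map (Pi.evalAddMonoidHom (fun _ : G => ℤ) g) := ⟨f, hf, rfl⟩
    rw [ha, Int.mem_zmultiples_iff] at this
    exact this

lemma index_nsmul_range {H : Type*} [AddCommGroup H] [Finite H] (p : ℕ) :
    (nsmulAddMonoidHom (α := H) p).range.index = Nat.card (nsmulAddMonoidHom (α := H) p).ker := by
  have h1 := AddSubgroup.card_mul_index (nsmulAddMonoidHom (α := H) p).ker
  have h2 := AddSubgroup.card_mul_index (nsmulAddMonoidHom (α := H) p).range
  rw [AddSubgroup.index_ker] at h1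
  have h3 : 0 < Nat.card (nsmulAddMonoidHom (α := H) p).range := Nat.card_pos
  rw [mul_comm, ← h2] at h1
  exact (Nat.eq_of_mul_eq_mul_left h3 h1).symm

lemma Good.rank_bound {F : Finset G} {d : ℕ} (hG : Good (F : Set G) d)
    (hd : AddMonoid.exponent G ≤ d + 2) {U : Multiset G} (hU : OmG (F : Set G) U) :
    ∃ p : ℕ, p.Prime ∧ F.card - 1 ≤ pRank G p := by
  obtain ⟨g₀, hg₀U⟩ := Multiset.exists_mem_of_ne_zero hU.1.2.1
  have hg₀ : g₀ ∈ (F : Set G) := hU.1.1.1 g₀ hg₀U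
  choose δ hδ1 hδ2 using exists_coord_gen (Lam (F : Set G))
  choose lam hlam hlamδ using hδ1
  have hδ0 : ∀ g ∈ (F : Set G), δ g ≠ 0 := by
    intro g hg h0
    have := hδ2 g _ (vec_mem_lam (triv_om1 hg).1.1)
    rw [h0, zero_dvd_iff] at this
    simp only [vec, count_triv, if_true] at this
    exact (addOrderOf_pos g).ne' (by exact_mod_cast this)
  obtain ⟨γ, ⟨μ, hμ, hμγ⟩, hγ⟩ := exists_coord_gen (Lam1 (F : Set G)) g₀
  obtain ⟨N, hN⟩ : δ g₀ ∣ γ := by rw [← hμγ]; exact hδ2 g₀ μ (lam1_le_lam _ hμ)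
  have hNu : N.natAbs ≠ 1 := by
    intro h1
    have hNd : N ∣ 1 := Int.natAbs_dvd_natAbs.1 (by simp [h1])
    obtain ⟨N', hN'⟩ := hNd
    obtain ⟨t, ht⟩ := hδ2 g₀ (vec U) (vec_mem_lam hU.1.1)
    have hk : vec U - (N' * t) • μ ∈ Lam1 (F : Set G) := by
      refine hG.ker_mem (sub_mem (vec_mem_lam hU.1.1) (zsmul_mem (lam1_le_lam _ hμ) _)) hg₀ ?_
      simp only [Pi.sub_apply, Pi.smul_apply, smul_eq_mul]
      rw [ht, hμγ, hN]
      linear_combination (δ g₀ * t) * hN'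
    have := add_mem hk (zsmul_mem hμ (N' * t))
    rw [sub_add_cancel] at this
    exact hG.vec_notMem hd hU this
  obtain ⟨p, hp, hpN⟩ := Nat.exists_prime_and_dvd hNu
  have hpN' : (p : ℤ) ∣ N := Int.natCast_dvd.2 hpN
  have hpp : Prime (p : ℤ) := Nat.prime_iff_prime_int.1 hp
  have hpγ : (p : ℤ) * δ g₀ ∣ γ := by
    rw [hN, mul_comm]; exact mul_dvd_mul_left _ hpN'
  have key : ∀ f ∈ Lam (F : Set G), (p : ℤ) * δ g₀ ∣ f g₀ → ∀ g ∈ (F : Set G),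
      (p : ℤ) * δ g ∣ f g := by
    intro f hf hfd g hg
    obtain ⟨c, hc⟩ := hδ2 g f hf
    by_cases hpc : (p : ℤ) ∣ c
    · rw [hc, mul_comm]; exact mul_dvd_mul_left _ hpc
    exfalso
    have hcop : IsCoprime (p : ℤ) c := (Prime.coprime_iff_not_dvd hpp).2 hpc
    obtain ⟨b, a, hab⟩ := hcop
    set h : G → ℤ := a • f + (b * p) • lam g with hh
    have hhL : h ∈ Lam (F : Set G) := add_mem (zsmul_mem hf _) (zsmul_mem (hlam g) _)
    have hhg : h g = δ g := by
      simp only [hh, Pi.add_apply, Pi.smul_apply, smul_eq_mul]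
      rw [hc, hlamδ]
      linear_combination (δ g) * hab
    have hh0 : (p : ℤ) * δ g₀ ∣ h g₀ := by
      simp only [hh, Pi.add_apply, Pi.smul_apply, smul_eq_mul]
      refine dvd_add (Dvd.dvd.mul_left hfd _) ?_
      rw [mul_assoc]
      exact Dvd.dvd.mul_left (mul_dvd_mul_left _ (hδ2 g₀ _ (hlam g))) _
    obtain ⟨t, ht⟩ := hδ2 g (lam g₀) (hlam g₀)
    have hk : lam g₀ - t • h ∈ Lam1 (F : Set G) := by
      refine hG.ker_mem (sub_mem (hlam g₀) (zsmul_mem hhL _)) hg ?_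
      simp only [Pi.sub_apply, Pi.smul_apply, smul_eq_mul]
      rw [ht, hhg]; ring
    have h5 := hpγ.trans (hγ _ hk)
    simp only [Pi.sub_apply, Pi.smul_apply, smul_eq_mul] at h5
    have h6 := dvd_add h5 (Dvd.dvd.mul_left hh0 t)
    rw [sub_add_cancel, hlamδ] at h6
    obtain ⟨q, hq⟩ := h6
    have h7 : δ g₀ * (p * q - 1) = 0 := by linear_combination -hq
    rcases mul_eq_zero.1 h7 with h8 | h8
    · exact hδ0 g₀ hg₀ h8
    · exact hpp.not_isUnit (isUnit_of_dvd_one ⟨q, by linarith⟩)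
  refine ⟨p, hp, ?_⟩
  let φ : (G → ℤ) →+ G :=
    { toFun := fun b => ∑ x ∈ F, (b x * δ x) • x
      map_zero' := by simp
      map_add' := fun a b => by simp [add_mul, add_smul, Finset.sum_add_distrib] }
  let H := φ.range
  let K := (nsmulAddMonoidHom (α := H) p).range
  have : NeZero p := ⟨hp.ne_zero⟩
  let E := F.erase g₀
  let ext : (E → Fin p) → (G → ℤ) := fun c x => if hx : x ∈ E then ((c ⟨x, hx⟩ : ℕ) : ℤ) else 0
  let Φ : (E → Fin p) → H ⧸ K := fun c => QuotientAddGroup.mk ⟨φ (ext c), ⟨ext c, rfl⟩⟩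
  have hinj : Function.Injective Φ := by
    intro c c' hcc
    rw [QuotientAddGroup.eq] at hcc
    obtain ⟨⟨_, ⟨b, rfl⟩⟩, hb⟩ := hcc
    have hb' : p • φ b = -φ (ext c) + φ (ext c') := congrArg Subtype.val hb
    let f : G → ℤ := fun x => if x ∈ F then (ext c x - ext c' x + p * b x) * δ x else 0
    have hfL : f ∈ Lam (F : Set G) := by
      refine ⟨fun x hx => by simp only [f]; rw [if_neg (by simpa using hx)], ?_⟩
      have e1 : ∑ x, f x • x = φ (ext c - ext c' + (p : ℤ) • b) := by
        simp only [f, φ]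
        rw [← Finset.sum_subset (Finset.subset_univ F)]
        · refine Finset.sum_congr rfl fun x hx => ?_
          rw [if_pos hx]; rfl
        · intro x _ hx; rw [if_neg hx, zero_smul]
      rw [e1, _root_.map_add, _root_.map_sub, map_zsmul, natCast_zsmul, hb']
      abel
    have hf0 : (p : ℤ) * δ g₀ ∣ f g₀ := by
      have hE : g₀ ∉ E := Finset.notMem_erase _ _
      simp only [f, ext, dif_neg hE]
      split_ifs
      · exact ⟨b g₀, by ring⟩
      · exact dvd_zero _
    funext ⟨x, hx⟩
    have hxF : x ∈ F := Finset.mem_of_mem_erase hx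
    have h1 := key f hfL hf0 x hxF
    simp only [f, if_pos hxF, ext, dif_pos hx] at h1
    have h2 := Int.dvd_of_mul_dvd_mul_right (hδ0 x hxF) h1
    have h3 : (p : ℤ) ∣ ((c ⟨x, hx⟩ : ℕ) : ℤ) - ((c' ⟨x, hx⟩ : ℕ) : ℤ) :=
      (dvd_add_left (dvd_mul_right _ _)).1 h2
    have h4 := (c ⟨x, hx⟩).2
    have h5 := (c' ⟨x, hx⟩).2
    apply Fin.ext
    have h6 := Int.eq_zero_of_abs_lt_dvd h3 (by rw [abs_lt]; constructor <;> omega)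
    omega
  have hc1 : Nat.card (E → Fin p) ≤ Nat.card (H ⧸ K) := Nat.card_le_card_of_injective Φ hinj
  have hc2 : Nat.card (H ⧸ K) = Nat.card (nsmulAddMonoidHom (α := H) p).ker :=
    index_nsmul_range (H := H) p
  have hc3 : Nat.card (nsmulAddMonoidHom (α := H) p).ker ≤ Nat.card {x : G // p • x = 0} := by
    refine Nat.card_le_card_of_injective
      (fun y => ⟨((y : H) : G), by
        have := y.2
        rw [AddMonoidHom.mem_ker] at this
        exact congrArg Subtype.val this⟩) ?_
    intro a b hab
    apply Subtype.ext
    apply Subtype.ext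
    have hab' := congrArg Subtype.val hab
    exact hab'
  have hc0 : Nat.card (E → Fin p) = p ^ (F.card - 1) := by
    have hE : Nat.card E = F.card - 1 := by
      rw [Nat.card_eq_fintype_card, Fintype.card_coe]
      exact Finset.card_erase_of_mem hg₀
    rw [Nat.card_fun, hE, Nat.card_fin]
  rw [hc0] at hc1
  exact Nat.le_log_of_pow_le hp.one_lt (hc1.trans (hc2.le.trans hc3))

end Aux4

section Aux5

variable {G : Type*} [AddCommGroup G] [Fintype G] [DecidableEq G]

/-- The product of the trivial atoms over `X`. -/
noncomputable def TX (X : Finset G) : Multiset G := ∑ x ∈ X, triv x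

lemma count_TX (X : Finset G) (y : G) :
    (TX X).count y = if y ∈ X then addOrderOf y else 0 := by
  simp only [TX, Multiset.count_sum', count_triv]
  rw [Finset.sum_ite_eq' X y (fun x => addOrderOf x)]

lemma TX_fac {F : Set G} (X : Finset G) (hX : ∀ x ∈ X, x ∈ F) :
    ∃ l : Multiset (Multiset G), Multiset.card l = X.card ∧ (∀ A ∈ l, Om1 F A) ∧ l.sum = TX X := by
  refine ⟨X.val.map triv, by simp, fun A hA => ?_, rfl⟩
  obtain ⟨x, hx, rfl⟩ := Multiset.mem_map.1 hA
  exact triv_om1 (hX x hx)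

lemma TX_length {F : Set G} (X : Finset G) (hX : ∀ x ∈ X, x ∈ F) :
    X.card ∈ LengthSet F (TX X) := by
  obtain ⟨l, h1, h2, h3⟩ := TX_fac X hX
  exact ⟨l, h1, fun A hA => (h2 A hA).1, h3⟩

lemma TX_fac1 {F : Set G} (X : Finset G) (hX : ∀ x ∈ X, x ∈ F) : Fac1 F (TX X) := by
  obtain ⟨l, h1, h2, h3⟩ := TX_fac X hX
  exact ⟨l, h2, h3⟩

lemma TX_cross (X : Finset G) : crossNumber (TX X) = X.card := by
  obtain ⟨l, h1, h2, h3⟩ := TX_fac (F := Set.univ) X (fun _ _ => trivial)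
  rw [← h3, crossNumber_sum_one fun A hA => (h2 A hA).2, h1]

lemma split_TX {F : Set G} {S : Multiset G} (hS : IsZeroSumSeq F S) (X : Finset G)
    (hX : ∀ x ∈ X, x ∈ F) (hc : ∀ x ∈ X, addOrderOf x ≤ S.count x) :
    ∃ R, S = TX X + R ∧ IsZeroSumSeq F R ∧ (vec R ∈ Lam1 F → vec S ∈ Lam1 F) ∧
      crossNumber S = X.card + crossNumber R := by
  have hle : TX X ≤ S := by
    rw [Multiset.le_iff_count]
    intro y
    rw [count_TX]
    split_ifs with h
    · exact hc y h
    · exact Nat.zero_le _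
  obtain ⟨R, rfl⟩ := Multiset.le_iff_exists_add.1 hle
  refine ⟨R, rfl, (TX_fac1 X hX).zs.of_add_left hS, fun h => ?_, ?_⟩
  · rw [vec_add]; exact add_mem (TX_fac1 X hX).vec_mem h
  · rw [crossNumber_add, TX_cross]

lemma exp_odd_order (hodd : Odd (AddMonoid.exponent G)) (x : G) : Odd (addOrderOf x) :=
  Odd.of_dvd_nat hodd (AddMonoid.addOrder_dvd_exponent x)

lemma lam1_of_two {F : Set G} (hodd : Odd (AddMonoid.exponent G)) {f : G → ℤ} (hf : f ∈ Lam F)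
    (h2 : f + f ∈ Lam1 F) : f ∈ Lam1 F := by
  obtain ⟨k, hk⟩ := hodd
  have h1 := exponent_smul_mem hf
  have h3 := sub_mem h1 (nsmul_mem h2 k)
  have : AddMonoid.exponent G • f - k • (f + f) = f := by
    rw [hk, add_smul, mul_smul, one_smul, smul_comm, two_smul]
    rw [smul_add]
    abel
  rwa [this] at h3

/-- Elements with large multiplicity. -/
noncomputable def XS (F : Finset G) (U : Multiset G) : Finset G :=
  F.filter fun x => addOrderOf x ≤ 2 * U.count x

lemma mem_XS {F : Finset G} {U : Multiset G} {x : G} :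
    x ∈ XS F U ↔ x ∈ F ∧ addOrderOf x ≤ 2 * U.count x := by simp [XS]

namespace Good

variable {F : Finset G} {d : ℕ}

lemma compl (hG : Good (F : Set G) d) (hd : AddMonoid.exponent G ≤ d + 2) (hm : F.card ≤ d + 2)
    {U : Multiset G} (hU : OmG (F : Set G) U) :
    ∃ V, OmG (F : Set G) V ∧ U + V = TX F ∧ d + 2 ≤ F.card ∧
      crossNumber U + crossNumber V = F.card := by
  have hle : U ≤ TX F := by
    rw [Multiset.le_iff_count]
    intro y
    rw [count_TX]
    split_ifs with h
    · exact (omG_count_lt hU y).le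
    · rw [Multiset.count_eq_zero_of_notMem fun h' => h (hU.1.1.1 y h')]
  obtain ⟨V, hV⟩ := Multiset.le_iff_exists_add.1 hle
  have hT := TX_fac1 (F := (F : Set G)) F (fun _ h => h)
  have hVz : IsZeroSumSeq (F : Set G) V := hU.1.1.of_add_left (hV ▸ hT.zs)
  have hVF : ¬ Fac1 (F : Set G) V := by
    intro h
    apply hG.vec_notMem hd hU
    have h1 := hT.vec_mem
    rw [hV, vec_add] at h1
    have := sub_mem h1 h.vec_mem
    rwa [add_sub_cancel_right] at this
  have hk : crossNumber U + crossNumber V = F.card := by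
    rw [← crossNumber_add, ← hV, TX_cross]
  obtain ⟨l, hl⟩ := exists_length hVz
  have hl1 : 1 ≤ l := pos_length hl (by rintro rfl; exact hVF (Fac1.zero _))
  have hlt := hG.length_lt hVF hl
  have h1 : 1 + l < F.card := by
    have := hU.2
    have : (1 + l : ℚ) < F.card := by linarith
    exact_mod_cast this
  have h2 := hG.gap (TX F) (1 + l) F.card (by rw [hV]; exact LengthSet.add hU.1.one_mem hl)
    (TX_length F (fun _ h => h)) h1
  have hl2 : l = 1 := by omega
  subst hl2
  exact ⟨V, hG.omG_of_atom (isAtomSeq_of_one_mem hl) hVF, hV.symm, by omega, hk⟩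

lemma cross_lt (hG : Good (F : Set G) d) (hd : AddMonoid.exponent G ≤ d + 2)
    (hm : F.card ≤ d + 2) {U : Multiset G} (hU : OmG (F : Set G) U) :
    crossNumber U + 1 < F.card := by
  obtain ⟨V, hV, _, _, hk⟩ := hG.compl hd hm hU
  have := hV.2
  linarith

lemma compl_count {U V : Multiset G} (h : U + V = TX F) {x : G} (hx : x ∈ F) :
    U.count x + V.count x = addOrderOf x := by
  rw [← Multiset.count_add, h, count_TX, if_pos hx]

lemma swap (hG : Good (F : Set G) d) (hd : AddMonoid.exponent G ≤ d + 2)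
    (hm : F.card ≤ d + 2) {U A : Multiset G} (hU : OmG (F : Set G) U) (hA : Om1 (F : Set G) A)
    (X : Finset G) (hX : X ⊆ F) (hc : ∀ x ∈ X, addOrderOf x ≤ U.count x + A.count x) :
    X.card ≤ 1 ∧ (X.card = 1 → ∃ S, OmG (F : Set G) S ∧ U + A = TX X + S) := by
  obtain ⟨S, hS, hSz, hSv, hk⟩ := split_TX (hU.1.1.add hA.1.1) X (fun x h => hX h)
    (fun x hx => by rw [Multiset.count_add]; exact hc x hx)
  have hSF : ¬ Fac1 (F : Set G) S := by
    intro h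
    apply hG.vec_notMem hd hU
    have := sub_mem (hSv h.vec_mem) hA.vec_mem
    rwa [vec_add, add_sub_cancel_right] at this
  obtain ⟨l, hl⟩ := exists_length hSz
  have hl1 : 1 ≤ l := pos_length hl (by rintro rfl; exact hSF (Fac1.zero _))
  have hlt := hG.length_lt hSF hl
  rw [crossNumber_add, hA.2] at hk
  have hkU := hG.cross_lt hd hm hU
  have h1 : X.card + l < F.card := by
    have : (X.card + l : ℚ) < F.card := by linarith
    exact_mod_cast this
  have h2 : X.card + l ≤ 2 := by
    by_contra hcon
    have := hG.gap (U + A) (1 + 1) (X.card + l) (LengthSet.add hU.1.one_mem hA.1.one_mem)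
      (by rw [hS]; exact LengthSet.add (TX_length X fun x h => hX h) hl) (by omega)
    omega
  refine ⟨by omega, fun h => ⟨S, ?_, hS⟩⟩
  have : l = 1 := by omega
  subst this
  exact hG.omG_of_atom (isAtomSeq_of_one_mem hl) hSF

lemma double (hG : Good (F : Set G) d) (hd : AddMonoid.exponent G ≤ d + 2)
    (hodd : Odd (AddMonoid.exponent G)) {U : Multiset G} (hU : OmG (F : Set G) U) :
    ∃ S l, U + U = TX (XS F U) + S ∧ l ∈ LengthSet (F : Set G) S ∧ 1 ≤ l ∧
      (l : ℚ) + (XS F U).card < 2 * crossNumber U := by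
  have hXF : ∀ x ∈ XS F U, x ∈ (F : Set G) := fun x hx => (mem_XS.1 hx).1
  obtain ⟨S, hS, hSz, hSv, hk⟩ := split_TX (hU.1.1.add hU.1.1) (XS F U) hXF
    (fun x hx => by rw [Multiset.count_add]; have := (mem_XS.1 hx).2; omega)
  have hSF : ¬ Fac1 (F : Set G) S := by
    intro h
    apply hG.vec_notMem hd hU
    have := hSv h.vec_mem
    rw [vec_add] at this
    exact lam1_of_two hodd (vec_mem_lam hU.1.1) this
  obtain ⟨l, hl⟩ := exists_length hSz
  have hl1 : 1 ≤ l := pos_length hl (by rintro rfl; exact hSF (Fac1.zero _))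
  have hlt := hG.length_lt hSF hl
  rw [crossNumber_add] at hk
  exact ⟨S, l, hS, hl, hl1, by linarith⟩

lemma two_le (hG : Good (F : Set G) d) (hd : AddMonoid.exponent G ≤ d + 2)
    (hm : F.card ≤ d + 2)
    (hodd : Odd (AddMonoid.exponent G)) {U : Multiset G} (hU : OmG (F : Set G) U)
    (h2 : 2 ≤ (XS F U).card) : (F.card : ℚ) < 2 * crossNumber U := by
  obtain ⟨S, l, hS, hl, hl1, hlt⟩ := hG.double hd hodd hU
  have h3 := hG.gap (U + U) (1 + 1) ((XS F U).card + l)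
    (LengthSet.add hU.1.one_mem hU.1.one_mem)
    (by rw [hS]; exact LengthSet.add (TX_length _ fun x hx => (mem_XS.1 hx).1) hl) (by omega)
  have : (F.card : ℚ) ≤ l + (XS F U).card := by
    have : F.card ≤ l + (XS F U).card := by omega
    exact_mod_cast this
  linarith

lemma not_all (hG : Good (F : Set G) d) (hd : AddMonoid.exponent G ≤ d + 2)
    (hm : F.card ≤ d + 2)
    (hodd : Odd (AddMonoid.exponent G)) {U : Multiset G} (hU : OmG (F : Set G) U) :
    (XS F U).card < F.card := by
  have hsub : XS F U ⊆ F := Finset.filter_subset _ _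
  refine Finset.card_lt_card (Finset.ssubset_iff_subset_ne.2 ⟨hsub, fun he => ?_⟩)
  obtain ⟨S, l, hS, hl, hl1, hlt⟩ := hG.double hd hodd hU
  obtain ⟨V, hV, hUV, _, hk⟩ := hG.compl hd hm hU
  have hkU := hG.cross_lt hd hm hU
  rw [he] at hS hlt
  have h3 := hG.gap (U + U) (1 + 1) (1 + 1 + l)
    (LengthSet.add hU.1.one_mem hU.1.one_mem)
    (by rw [hS, ← hUV]
        exact LengthSet.add (LengthSet.add hU.1.one_mem hV.1.one_mem) hl) (by omega)
  have : (F.card : ℚ) ≤ l + 2 := by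
    have : F.card ≤ l + 2 := by omega
    exact_mod_cast this
  linarith

lemma XS_compl (hodd : Odd (AddMonoid.exponent G)) {U V : Multiset G} (h : U + V = TX F) :
    XS F V = F \ XS F U := by
  ext x
  simp only [Finset.mem_sdiff, mem_XS]
  constructor
  · rintro ⟨hx, h1⟩
    have := compl_count h hx
    obtain ⟨k, hk⟩ := exp_odd_order hodd x
    exact ⟨hx, fun h2 => by omega⟩
  · rintro ⟨hx, h1⟩
    have := compl_count h hx
    refine ⟨hx, ?_⟩
    have : ¬ addOrderOf x ≤ 2 * U.count x := fun h2 => h1 ⟨hx, h2⟩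
    omega

lemma dichotomy (hG : Good (F : Set G) d) (hd : AddMonoid.exponent G ≤ d + 2)
    (hm : F.card ≤ d + 2)
    (hodd : Odd (AddMonoid.exponent G)) {U : Multiset G} (hU : OmG (F : Set G) U) :
    ((XS F U).card = 1 ∨ (XS F U).card + 1 = F.card) ∧
    ∃ V, OmG (F : Set G) V ∧ (XS F U).card + (XS F V).card = F.card := by
  obtain ⟨V, hV, hUV, _, hk⟩ := hG.compl hd hm hU
  have h1 := hG.not_all hd hm hodd hU
  have h2 := hG.not_all hd hm hodd hV
  have h3 : (XS F U).card + (XS F V).card = F.card := by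
    have hsub : XS F U ⊆ F := Finset.filter_subset _ _
    rw [XS_compl hodd hUV, Finset.card_sdiff_of_subset hsub]
    omega
  refine ⟨?_, V, hV, h3⟩
  by_contra hcon
  have h4 := hG.two_le hd hm hodd hU (by omega)
  have h5 := hG.two_le hd hm hodd hV (by omega)
  linarith

lemma exists_small (hG : Good (F : Set G) d) (hd : AddMonoid.exponent G ≤ d + 2)
    (hm : F.card ≤ d + 2)
    (hodd : Odd (AddMonoid.exponent G)) {U : Multiset G} (hU : OmG (F : Set G) U) :
    ∃ s ∈ F, ∃ V, OmG (F : Set G) V ∧ XS F V = {s} := by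
  have key : ∃ V, OmG (F : Set G) V ∧ (XS F V).card = 1 := by
    obtain ⟨h1 | h1, V, hV, h2⟩ := hG.dichotomy hd hm hodd hU
    · exact ⟨U, hU, h1⟩
    · exact ⟨V, hV, by omega⟩
  obtain ⟨V, hV, h⟩ := key
  obtain ⟨s, hs⟩ := Finset.card_eq_one.1 h
  refine ⟨s, ?_, V, hV, hs⟩
  have : s ∈ XS F V := by rw [hs]; simp
  exact (mem_XS.1 this).1

lemma small_case (hG : Good (F : Set G) d) (hd : AddMonoid.exponent G ≤ d + 2)
    (hodd : Odd (AddMonoid.exponent G)) {U A : Multiset G} (hU : OmG (F : Set G) U)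
    (hA : Om1 (F : Set G) A) (h3 : AddMonoid.exponent G ≤ 3) : ∃ g, A = triv g := by
  by_contra hcon
  push Not at hcon
  obtain ⟨x, hx⟩ := Multiset.exists_mem_of_ne_zero hA.1.2.1
  have hc := atom_count_lt hA.1 (hcon x)
  have hpos : 0 < A.count x := Multiset.count_pos.2 hx
  have hdv := AddMonoid.addOrder_dvd_exponent x
  have hn0 : AddMonoid.exponent G ≠ 0 := AddMonoid.exponent_ne_zero_of_finite
  have hle := Nat.le_of_dvd (Nat.pos_of_ne_zero hn0) hdv
  obtain ⟨k, hk⟩ := exp_odd_order hodd x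
  have ho : addOrderOf x = 3 := by omega
  have hu := omG_count_lt hU x
  have ht : ∃ t : ℕ, 3 ∣ U.count x + t * A.count x := by
    have h1 : A.count x = 1 ∨ A.count x = 2 := by omega
    have h2 : U.count x = 0 ∨ U.count x = 1 ∨ U.count x = 2 := by omega
    rcases h1 with h1 | h1 <;> rcases h2 with h2 | h2 | h2 <;> rw [h1, h2]
    · exact ⟨0, by norm_num⟩
    · exact ⟨2, by norm_num⟩
    · exact ⟨1, by norm_num⟩
    · exact ⟨0, by norm_num⟩
    · exact ⟨1, by norm_num⟩
    · exact ⟨2, by norm_num⟩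
  obtain ⟨t, ht⟩ := ht
  have hW : ∀ W ∈ Multiset.replicate t A, Om1 (F : Set G) W := fun W hW => by
    rw [Multiset.eq_of_mem_replicate hW]; exact hA
  refine hG.chain hd hU hW (hG.fac1_of_dvd (g := x)
    (hU.1.1.add (isZeroSumSeq_sum fun W h => (hW W h).1.1)) (hA.1.1.1 x hx) ?_)
  rw [ho, Multiset.count_add, Multiset.sum_replicate, Multiset.count_nsmul]
  exact ht

lemma trivial_of_missing (hG : Good (F : Set G) d) (hd : AddMonoid.exponent G ≤ d + 2)
    (hm : F.card ≤ d + 2)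
    (hodd : Odd (AddMonoid.exponent G)) {U₀ A : Multiset G} (hU₀ : OmG (F : Set G) U₀) {s : G}
    (hs : XS F U₀ = {s}) (hA : Om1 (F : Set G) A) (hsA : s ∉ A) : ∃ g, A = triv g := by
  by_contra hcon
  have hm4 : 4 ≤ F.card := by
    by_contra h4
    obtain ⟨V, _, _, h, _⟩ := hG.compl hd hm hU₀
    exact hcon (hG.small_case hd hodd hU₀ hA (by omega))
  push Not at hcon
  have hAs : A.count s = 0 := Multiset.count_eq_zero_of_notMem hsA
  have small : ∀ U, XS F U = {s} → ∀ x ∈ F, x ≠ s → 2 * U.count x < addOrderOf x := by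
    intro U h x hx hne
    by_contra hcon
    have : x ∈ XS F U := mem_XS.2 ⟨hx, by omega⟩
    rw [h] at this
    exact hne (by simpa using this)
  have hz : ∃ z ∈ F, z ≠ s ∧ addOrderOf z < 2 * A.count z := by
    obtain ⟨V, hV, hUV, _, _⟩ := hG.compl hd hm hU₀
    have hnle : ¬ A ≤ V := by
      intro hle
      have := hV.1.eq_of_le hA.1.1.2 hA.1.2.1 hle
      have h1 := hA.2
      rw [this] at h1
      have := hV.2
      linarith
    rw [Multiset.le_iff_count] at hnle
    push Not at hnle
    obtain ⟨z, hz⟩ := hnle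
    have hzA : z ∈ A := Multiset.count_pos.1 (by omega)
    have hzF : z ∈ F := hA.1.1.1 z hzA
    have hzs : z ≠ s := by rintro rfl; exact hsA hzA
    have h1 := compl_count hUV hzF
    have h2 := small U₀ hs z hzF hzs
    exact ⟨z, hzF, hzs, by omega⟩
  obtain ⟨z, hzF, hzs, hzA⟩ := hz
  have step : ∀ U, OmG (F : Set G) U → XS F U = {s} →
      ∃ U', OmG (F : Set G) U' ∧ XS F U' = {s} ∧ U.count z < U'.count z := by
    intro U hU hUs
    obtain ⟨V, hV, hUV, _, _⟩ := hG.compl hd hm hU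
    set X := F.filter fun x => addOrderOf x ≤ V.count x + A.count x with hX
    have hXF : X ⊆ F := Finset.filter_subset _ _
    obtain ⟨hX1, hX2⟩ := hG.swap hd hm hV hA X hXF
      (fun x hx => (Finset.mem_filter.1 hx).2)
    have hzX : z ∈ X := by
      rw [hX, Finset.mem_filter]
      have h1 := compl_count hUV hzF
      have h2 := small U hUs z hzF hzs
      exact ⟨hzF, by omega⟩
    have hXz : X = {z} := by
      refine Finset.eq_singleton_iff_unique_mem.2 ⟨hzX, fun y hy => ?_⟩
      exact Finset.card_le_one.1 hX1 y hy z hzX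
    obtain ⟨S, hS, hSe⟩ := hX2 (by rw [hXz]; simp)
    obtain ⟨U', hU', hSU, _, _⟩ := hG.compl hd hm hS
    have hcount : ∀ x ∈ F, x ≠ z → U'.count x + A.count x = U.count x := by
      intro x hx hne
      have h1 := compl_count hUV hx
      have h2 := compl_count hSU hx
      have h3 := congrArg (Multiset.count x) hSe
      rw [Multiset.count_add, Multiset.count_add, count_TX, hXz, if_neg (by simpa using hne)] at h3
      omega
    have hcz : U'.count z + A.count z = U.count z + addOrderOf z := by
      have h1 := compl_count hUV hzF
      have h2 := compl_count hSU hzF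
      have h3 := congrArg (Multiset.count z) hSe
      rw [Multiset.count_add, Multiset.count_add, count_TX, hXz, if_pos (by simp)] at h3
      omega
    have hAz := atom_count_lt hA.1 (hcon z)
    have hsub : XS F U' ⊆ {s, z} := by
      intro x hx
      obtain ⟨hx1, hx2⟩ := mem_XS.1 hx
      by_cases hxz : x = z
      · simp [hxz]
      by_cases hxs : x = s
      · simp [hxs]
      have := hcount x hx1 hxz
      have := small U hUs x hx1 hxs
      omega
    have hsX : s ∈ XS F U' := by
      have : s ∈ XS F U := by rw [hUs]; simp
      obtain ⟨hsF, h2⟩ := mem_XS.1 this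
      have := hcount s hsF hzs.symm
      exact mem_XS.2 ⟨hsF, by omega⟩
    have hc2 : (XS F U').card ≤ 2 := (Finset.card_le_card hsub).trans Finset.card_le_two
    have hc1 : (XS F U').card = 1 := by
      rcases (hG.dichotomy hd hm hodd hU').1 with h | h
      · exact h
      · omega
    refine ⟨U', hU', ?_, by omega⟩
    obtain ⟨y, hy⟩ := Finset.card_eq_one.1 hc1
    rw [hy] at hsX ⊢
    rw [Finset.mem_singleton.1 hsX]
  have iter : ∀ k : ℕ, ∃ U, OmG (F : Set G) U ∧ XS F U = {s} ∧ k ≤ U.count z := by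
    intro k
    induction k with
    | zero => exact ⟨U₀, hU₀, hs, Nat.zero_le _⟩
    | succ k ih =>
      obtain ⟨U, h1, h2, h3⟩ := ih
      obtain ⟨U', h1', h2', h3'⟩ := step U h1 h2
      exact ⟨U', h1', h2', by omega⟩
  obtain ⟨U, h1, _, h3⟩ := iter (addOrderOf z)
  have := omG_count_lt h1 z
  omega

lemma indep (hG : Good (F : Set G) d) (hd : AddMonoid.exponent G ≤ d + 2)
    (hm : F.card ≤ d + 2)
    (hodd : Odd (AddMonoid.exponent G)) {U : Multiset G} (hU : OmG (F : Set G) U) :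
    ∃ g ∈ (F : Set G), IsIndependentSet ((F : Set G) \ {g}) := by
  obtain ⟨s, hsF, U₀, hU₀, hs⟩ := hG.exists_small hd hm hodd hU
  refine ⟨s, hsF, ?_, ?_⟩
  · rintro ⟨h0, -⟩
    have h1 := hG.full hU h0
    have h2 := omG_count_lt hU 0
    rw [addOrderOf_zero] at h2
    have := Multiset.count_pos.2 h1
    omega
  intro t ht f hf e he
  have hn : (0 : ℤ) < AddMonoid.exponent G := by
    exact_mod_cast Nat.pos_of_ne_zero (AddMonoid.exponent_ne_zero_of_finite (G := G))
  set S := mkSeq fun x => if x ∈ t then (f x % AddMonoid.exponent G).toNat else 0 with hS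
  have hmod : ∀ x : G, (f x % AddMonoid.exponent G).toNat • x = f x • x := by
    intro x
    rw [← natCast_zsmul, Int.toNat_of_nonneg (Int.emod_nonneg _ hn.ne')]
    conv_rhs => rw [← Int.emod_add_mul_ediv (f x) (AddMonoid.exponent G)]
    rw [add_smul, mul_comm, mul_smul, natCast_zsmul, AddMonoid.exponent_nsmul_eq_zero, smul_zero,
      add_zero]
  have hcount : ∀ x, S.count x = if x ∈ t then (f x % AddMonoid.exponent G).toNat else 0 :=
    fun x => count_mkSeq _ x
  have hSt : ∀ x ∈ S, x ∈ t := by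
    intro x hx
    by_contra h
    have := Multiset.count_pos.2 hx
    rw [hcount, if_neg h] at this
    exact lt_irrefl _ this
  have hSz : IsZeroSumSeq (F : Set G) S := by
    refine ⟨fun x hx => (ht (hSt x hx)).1, ?_⟩
    rw [seq_sum_eq, ← hf, ← Finset.sum_subset (Finset.subset_univ t)]
    · refine Finset.sum_congr rfl fun x hx => ?_
      rw [hcount, if_pos hx, hmod]
    · intro x _ hx
      rw [hcount, if_neg hx, zero_smul]
  have hsS : s ∉ S := fun h => (ht (hSt s h)).2 rfl
  obtain ⟨l, hl, hls⟩ := exists_fact S hSz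
  have hdv : ∀ l : Multiset (Multiset G), (∀ A ∈ l, ∃ g, A = triv g) →
      addOrderOf e ∣ l.sum.count e := by
    intro l
    induction l using Multiset.induction_on with
    | empty => intro _; simp
    | cons a l ih =>
      intro h
      rw [Multiset.sum_cons, Multiset.count_add]
      refine dvd_add ?_ (ih fun A hA => h A (by simp [hA]))
      obtain ⟨g, hg⟩ := h a (by simp)
      rw [hg, count_triv]
      split_ifs with h'
      · rw [h']
      · exact dvd_zero _
  have h1 := hdv l (fun A hA => by
    have hAS : s ∉ A := fun h => hsS (by
      rw [← hls]; exact Multiset.mem_of_le (Multiset.single_le_sum (by simp) A hA) h)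
    exact hG.trivial_of_missing hd hm hodd hU₀ hs
      ⟨hl A hA, hG.prop A (hl A hA) s hsF hAS⟩ hAS)
  rw [hls, hcount, if_pos he] at h1
  rw [← hmod]
  exact addOrderOf_dvd_iff_nsmul_eq_zero.1 h1

end Good

end Aux5

section Aux6

variable {G : Type*} [AddCommGroup G]

lemma delta_of_two {L : Set ℕ} {x y : ℕ} (hx : x ∈ L) (hy : y ∈ L) (h : x < y) :
    ∃ e ∈ DeltaOf L, e ≤ y - x := by
  classical
  have hex : ∃ z, z ∈ L ∧ x < z := ⟨y, hy, h⟩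
  obtain ⟨h1, h2⟩ := Nat.find_spec hex
  refine ⟨Nat.find hex - x, ⟨x, hx, Nat.find hex, h1, h2, rfl, ?_⟩, ?_⟩
  · rintro z hz ⟨hz1, hz2⟩
    exact Nat.find_min hex hz2 ⟨hz, hz1⟩
  · have := Nat.find_min' hex ⟨hy, h⟩
    omega

lemma length_zero {G₀ : Set G} {x : ℕ} (hx : x ∈ LengthSet G₀ (0 : Multiset G)) : x = 0 := by
  obtain ⟨l, c, h, s⟩ := hx
  rw [← c, Multiset.card_eq_zero]
  by_contra hl
  obtain ⟨A, hA⟩ := Multiset.exists_mem_of_ne_zero hl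
  have hle : A ≤ 0 := by rw [← s]; exact Multiset.single_le_sum (by simp) A hA
  exact (h A hA).2.1 (Multiset.le_zero.1 hle)

lemma length_zs {G₀ : Set G} {B : Multiset G} {x : ℕ} (hx : x ∈ LengthSet G₀ B) :
    IsZeroSumSeq G₀ B := by
  obtain ⟨l, c, h, rfl⟩ := hx
  exact isZeroSumSeq_sum fun A hA => (h A hA).1

lemma delta_set_of_two {G₀ : Set G} {B : Multiset G} {x y : ℕ} (hx : x ∈ LengthSet G₀ B)
    (hy : y ∈ LengthSet G₀ B) (h : x < y) : ∃ e ∈ DeltaSet G₀, e ≤ y - x := by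
  obtain ⟨e, he, hle⟩ := delta_of_two hx hy h
  refine ⟨e, ⟨B, length_zs hx, ?_, he⟩, hle⟩
  rintro rfl
  have := length_zero hx
  have := length_zero hy
  omega

lemma Fac1.nsmul {G₀ : Set G} {B : Multiset G} (hB : Fac1 G₀ B) (k : ℕ) : Fac1 G₀ (k • B) := by
  induction k with
  | zero => rw [zero_smul]; exact Fac1.zero _
  | succ k ih => rw [add_smul, one_smul]; exact ih.add hB

variable [Fintype G] [DecidableEq G]

lemma fac1_exponent {G₀ : Set G} (A : Multiset G) (hA : ∀ x ∈ A, x ∈ G₀) :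
    Fac1 G₀ (AddMonoid.exponent G • A) := by
  induction A using Multiset.induction_on with
  | empty => rw [smul_zero]; exact Fac1.zero _
  | cons a A ih =>
    have h1 : AddMonoid.exponent G • (a ::ₘ A) =
        (AddMonoid.exponent G / addOrderOf a) • triv a + AddMonoid.exponent G • A := by
      rw [← Multiset.singleton_add, smul_add, triv, Multiset.nsmul_replicate,
        Nat.div_mul_cancel (AddMonoid.addOrder_dvd_exponent a), Multiset.nsmul_singleton]
    rw [h1]
    exact ((triv_om1 (hA a (by simp))).fac1.nsmul _).add (ih fun x hx => hA x (by simp [hx]))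

lemma crossNumber_nsmul (k : ℕ) (A : Multiset G) : crossNumber (k • A) = k * crossNumber A := by
  induction k with
  | zero => simp [crossNumber_zero]
  | succ k ih => rw [add_smul, one_smul, crossNumber_add, ih]; push_cast; ring

lemma cross_one_of_hf {G₁ : Set G} (h : DeltaSet G₁ = ∅) {A : Multiset G} (hA : IsAtomSeq G₁ A) :
    crossNumber A = 1 := by
  have hn : (0 : ℚ) < AddMonoid.exponent G := by
    exact_mod_cast Nat.pos_of_ne_zero (AddMonoid.exponent_ne_zero_of_finite (G := G))
  obtain ⟨l, hl, hs⟩ := fac1_exponent (G₀ := G₁) A hA.1.1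
  have h1 : Multiset.card l ∈ LengthSet G₁ (AddMonoid.exponent G • A) :=
    ⟨l, rfl, fun X hX => (hl X hX).1, hs⟩
  have h2 : AddMonoid.exponent G ∈ LengthSet G₁ (AddMonoid.exponent G • A) :=
    ⟨Multiset.replicate (AddMonoid.exponent G) A, by simp, fun X hX => by
      rw [Multiset.eq_of_mem_replicate hX]; exact hA, by rw [Multiset.sum_replicate]⟩
  have h3 : Multiset.card l = AddMonoid.exponent G := by
    rcases lt_trichotomy (Multiset.card l) (AddMonoid.exponent G) with h' | h' | h'
    · obtain ⟨e, he, _⟩ := delta_set_of_two h1 h2 h'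
      rw [h] at he; exact he.elim
    · exact h'
    · obtain ⟨e, he, _⟩ := delta_set_of_two h2 h1 h'
      rw [h] at he; exact he.elim
  have h4 := crossNumber_sum_one fun X hX => (hl X hX).2
  rw [hs, crossNumber_nsmul, h3] at h4
  have : (AddMonoid.exponent G : ℚ) * (crossNumber A - 1) = 0 := by linarith
  rcases mul_eq_zero.1 this with h5 | h5
  · exact absurd h5 hn.ne'
  · linarith

lemma good_of {G₀ : Set G} (hmin : IsMinNonHalfFactorial G₀) (hLCN : IsLCNSet G₀) :
    Good G₀ (sInf (DeltaSet G₀)) where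
  gap := by
    intro B x y hx hy h
    obtain ⟨e, he, hle⟩ := delta_set_of_two hx hy h
    have := Nat.sInf_le he
    omega
  lcn := hLCN
  prop := by
    intro A hA g hg hgA
    refine cross_one_of_hf (hmin.2 (G₀ \ {g}) ?_) (hA.change fun x hx => ⟨hA.1.1 x hx, ?_⟩)
    · exact ⟨Set.sdiff_subset, fun h => (h hg).2 rfl⟩
    · rintro rfl; exact hgA hx

lemma exists_omG {G₀ : Set G} (hmin : IsMinNonHalfFactorial G₀) (hLCN : IsLCNSet G₀) :
    ∃ U, OmG G₀ U := by
  by_contra hcon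
  push Not at hcon
  obtain ⟨e, B, hB, _, x, ⟨l1, c1, h1, s1⟩, y, ⟨l2, c2, h2, s2⟩, hxy, _⟩ := hmin.1
  have key : ∀ A, IsAtomSeq G₀ A → crossNumber A = 1 := fun A hA =>
    le_antisymm (not_lt.1 fun h => hcon A ⟨hA, h⟩) (hLCN A hA)
  have e1 := crossNumber_sum_one fun A hA => key A (h1 A hA)
  have e2 := crossNumber_sum_one fun A hA => key A (h2 A hA)
  rw [s1, c1] at e1
  rw [s2, e1, c2] at e2
  have : x = y := by exact_mod_cast e2
  omega

/-- The weight used in the example. -/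
def wt {r : ℕ} (e : Fin r → G) (g : G) (S : Multiset G) : ℕ :=
  ∑ i, (S.count g + S.count (e i))

lemma wt_add {r : ℕ} (e : Fin r → G) (g : G) (S T : Multiset G) :
    wt e g (S + T) = wt e g S + wt e g T := by
  simp only [wt, Multiset.count_add]
  rw [← Finset.sum_add_distrib]
  exact Finset.sum_congr rfl fun i _ => by ring

lemma example_bound {r p : ℕ} (hp : p.Prime) (hr : 2 ≤ r) (e : Fin r → G)
    (hpe : ∀ i, p • e i = 0) (hind : ∀ c : Fin r → ℕ, ∑ i, c i • e i = 0 → ∀ i, p ∣ c i) :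
    ∃ G₁ : Set G, (DeltaSet G₁).Nonempty ∧ ∀ t ∈ DeltaSet G₁, r - 1 ≤ t := by
  have hp2 := hp.two_le
  have hinj : Function.Injective e := by
    intro i j hij
    by_contra hne
    have h := hind (Pi.single i 1 + Pi.single j (p - 1)) (by
      simp only [Pi.add_apply, add_smul, Finset.sum_add_distrib]
      simp only [Pi.single_apply, ite_smul, zero_smul, one_smul, Finset.sum_ite_eq',
        Finset.mem_univ, if_true]
      rw [hij]
      nth_rewrite 1 [← one_smul ℕ (e j)]
      rw [← add_smul, show 1 + (p - 1) = p by omega, hpe]) i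
    rw [Pi.add_apply, Pi.single_eq_same, Pi.single_eq_of_ne hne, add_zero] at h
    have := Nat.le_of_dvd one_pos h
    omega
  set g : G := ∑ i, e i with hg
  have hne : ∀ i, e i ≠ g := by
    intro i hi
    have : Nontrivial (Fin r) := Fin.nontrivial_iff_two_le.2 hr
    obtain ⟨j, hj⟩ := exists_ne i
    have h := hind (1 + Pi.single i (p - 1)) (by
      simp only [Pi.add_apply, add_smul, Finset.sum_add_distrib]
      simp only [Pi.one_apply, one_smul, Pi.single_apply, ite_smul, zero_smul,
        Finset.sum_ite_eq', Finset.mem_univ, if_true]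
      rw [← hg, ← hi]
      nth_rewrite 1 [← one_smul ℕ (e i)]
      rw [← add_smul, show 1 + (p - 1) = p by omega, hpe]) j
    rw [Pi.add_apply, Pi.single_eq_of_ne hj, add_zero, Pi.one_apply] at h
    have := Nat.le_of_dvd one_pos h
    omega
  have he0 : ∀ i, e i ≠ 0 := by
    intro i hi
    have h := hind (Pi.single i 1) (by simp [Pi.single_apply, hi]) i
    rw [Pi.single_eq_same] at h
    have := Nat.le_of_dvd one_pos h
    omega
  have hpg : p • g = 0 := by
    rw [hg, Finset.smul_sum]; exact Finset.sum_eq_zero fun i _ => hpe i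
  have hg0 : g ≠ 0 := by
    intro h0
    have h := hind 1 (by simpa using h0) ⟨0, by omega⟩
    have := Nat.le_of_dvd one_pos h
    omega
  have : Fact p.Prime := ⟨hp⟩
  have hoe : ∀ i, addOrderOf (e i) = p := fun i => addOrderOf_eq_prime (hpe i) (he0 i)
  have hog : addOrderOf g = p := addOrderOf_eq_prime hpg hg0
  set G₁ : Set G := {x | x = g ∨ ∃ i, x = e i} with hG₁
  have heG : ∀ i, e i ∈ G₁ := fun i => Or.inr ⟨i, rfl⟩
  have hgG : g ∈ G₁ := Or.inl rfl
  have hzs : ∀ S, IsZeroSumSeq G₁ S → ∀ i, p ∣ S.count g + S.count (e i) := by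
    intro S hS
    apply hind
    have h1 : S.sum = S.count g • g + ∑ i, S.count (e i) • e i := by
      rw [seq_sum_eq, ← Finset.sum_subset (Finset.subset_univ (insert g (Finset.univ.image e)))]
      · rw [Finset.sum_insert, Finset.sum_image (fun i _ j _ h => hinj h)]
        simpa using hne
      · intro x _ hx
        rw [Multiset.count_eq_zero_of_notMem, zero_smul]
        intro hxS
        apply hx
        rcases hS.1 x hxS with h | ⟨i, h⟩
        · simp [h]
        · simp [h]
    rw [hS.2] at h1
    simp only [add_smul, Finset.sum_add_distrib]
    rw [← Finset.smul_sum, ← hg]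
    exact h1.symm
  have hzero : ∀ S : Multiset G, (∀ x ∈ S, x ∈ G₁) → S.count g = 0 → (∀ i, S.count (e i) = 0) →
      S = 0 := by
    intro S h1 h2 h3
    refine Multiset.eq_zero_of_forall_notMem fun x hx => ?_
    have h4 := Multiset.count_pos.2 hx
    rcases h1 x hx with h | ⟨i, h⟩
    · rw [h, h2] at h4; exact lt_irrefl _ h4
    · rw [h, h3] at h4; exact lt_irrefl _ h4
  have hatom : ∀ A, IsAtomSeq G₁ A → wt e g A = p ∨ wt e g A = r * p := by
    intro A hA
    by_cases h1 : ∃ i, A = triv (e i)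
    · left
      obtain ⟨i, rfl⟩ := h1
      simp only [wt, count_triv, if_neg (hne i), zero_add, hoe]
      rw [Finset.sum_eq_single i]
      · simp
      · intro j _ hj
        rw [if_neg fun h => hj (hinj h).symm]
      · simp
    right
    by_cases h2 : A = triv g
    · subst h2
      simp only [wt, count_triv, if_true, hog]
      rw [Finset.sum_congr rfl (g := fun _ => p)]
      · simp
      · intro i _
        rw [if_neg (hne i).symm, add_zero]
    push Not at h1
    have ha := atom_count_lt hA h2
    rw [hog] at ha
    have hb : ∀ i, A.count (e i) < p := fun i => by
      have := atom_count_lt hA (h1 i)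
      rwa [hoe] at this
    have hd := hzs A hA.1
    have ha0 : A.count g ≠ 0 := by
      intro h0
      refine hA.2.1 (hzero A hA.1.1 h0 fun i => ?_)
      have := hd i
      rw [h0, zero_add] at this
      exact Nat.eq_zero_of_dvd_of_lt this (hb i)
    have : ∀ i, A.count g + A.count (e i) = p := by
      intro i
      obtain ⟨k, hk⟩ := hd i
      have h3 := hb i
      have hk2 : k < 2 := by
        by_contra hk2
        have : p * 2 ≤ p * k := Nat.mul_le_mul_left _ (by omega)
        omega
      have hk0 : k ≠ 0 := by rintro rfl; omega
      have : k = 1 := by omega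
      rw [hk, this, mul_one]
    simp [wt, this]
  have hlen : ∀ l : Multiset (Multiset G), (∀ A ∈ l, IsAtomSeq G₁ A) →
      ∃ k, wt e g l.sum = p * Multiset.card l + k * (p * (r - 1)) := by
    intro l
    induction l using Multiset.induction_on with
    | empty => intro _; exact ⟨0, by simp [wt]⟩
    | cons A l ih =>
      intro h
      obtain ⟨k, hk⟩ := ih fun X hX => h X (by simp [hX])
      rw [Multiset.sum_cons, wt_add, Multiset.card_cons, hk]
      rcases hatom A (h A (by simp)) with h1 | h1
      · exact ⟨k, by rw [h1]; ring⟩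
      · refine ⟨k + 1, ?_⟩
        rw [h1]
        obtain ⟨q, rfl⟩ : ∃ q, r = q + 1 := ⟨r - 1, by omega⟩
        simp only [Nat.add_sub_cancel]
        ring
  refine ⟨G₁, ?_, ?_⟩
  · skip
    set W : Multiset G := {g} + ∑ i, Multiset.replicate (p - 1) (e i) with hW
    have hcg : W.count g = 1 := by
      simp only [hW, Multiset.count_add, Multiset.count_singleton_self, Multiset.count_sum',
        Multiset.count_replicate]
      rw [Finset.sum_eq_zero fun i _ => if_neg (hne i), add_zero]
    have hce : ∀ j, W.count (e j) = p - 1 := by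
      intro j
      simp only [hW, Multiset.count_add, Multiset.count_singleton, Multiset.count_sum',
        Multiset.count_replicate]
      rw [if_neg (hne j), Finset.sum_eq_single j]
      · simp
      · intro i _ hi
        rw [if_neg fun h => hi (hinj h)]
      · simp
    have hWG : ∀ x ∈ W, x ∈ G₁ := by
      intro x hx
      rcases Multiset.mem_add.1 hx with h | h
      · rw [Multiset.mem_singleton] at h
        exact Or.inl h
      · obtain ⟨i, _, hi⟩ := Multiset.mem_sum.1 h
        exact Or.inr ⟨i, Multiset.eq_of_mem_replicate hi⟩
    have hWs : W.sum = 0 := by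
      rw [hW, Multiset.sum_add, Multiset.sum_singleton, hg, Multiset.sum_sum, ← Finset.sum_add_distrib]
      refine Finset.sum_eq_zero fun i _ => ?_
      rw [Multiset.sum_replicate]
      nth_rewrite 1 [← one_smul ℕ (e i)]
      rw [← add_smul, show 1 + (p - 1) = p by omega, hpe]
    have hWa : IsAtomSeq G₁ W := by
      refine isAtomSeq_mk ⟨hWG, hWs⟩ ?_ ?_
      · intro h
        rw [h] at hcg
        simp at hcg
      · intro B hB hBs hB0
        have hBG : ∀ x ∈ B, x ∈ G₁ := fun x hx => hWG x (Multiset.mem_of_le hB hx)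
        have hd := hzs B ⟨hBG, hBs⟩
        have hle := Multiset.le_iff_count.1 hB
        have hBg := hle g
        rw [hcg] at hBg
        have hBe : ∀ i, B.count (e i) ≤ p - 1 := fun i => (hle (e i)).trans (hce i).le
        have h1 : B.count g = 1 := by
          by_contra hne1
          have h0 : B.count g = 0 := by omega
          refine hB0 (hzero B hBG h0 fun i => ?_)
          have := hd i
          rw [h0, zero_add] at this
          exact Nat.eq_zero_of_dvd_of_lt this (by have := hBe i; omega)
        obtain ⟨C, hC⟩ := Multiset.le_iff_exists_add.1 hB
        have hC0 : C = 0 := by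
          refine hzero C (fun x hx => hWG x ?_) ?_ fun i => ?_
          · rw [hC]; exact Multiset.mem_add.2 (Or.inr hx)
          · have := congrArg (Multiset.count g) hC
            rw [hcg, Multiset.count_add, h1] at this
            omega
          · have h2 := congrArg (Multiset.count (e i)) hC
            rw [hce, Multiset.count_add] at h2
            have h3 := hd i
            rw [h1] at h3
            have := Nat.le_of_dvd (by omega) h3
            omega
        rw [hC, hC0, add_zero]
    have hl1 : p ∈ LengthSet G₁ (p • W) :=
      ⟨Multiset.replicate p W, by simp, fun X hX => by
        rw [Multiset.eq_of_mem_replicate hX]; exact hWa, by rw [Multiset.sum_replicate]⟩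
    have hl2 : 1 + r * (p - 1) ∈ LengthSet G₁ (p • W) := by
      refine ⟨{triv g} + ∑ i, Multiset.replicate (p - 1) (triv (e i)), ?_, ?_, ?_⟩
      · rw [Multiset.card_add, Multiset.card_sum]
        simp
      · intro A hA
        rcases Multiset.mem_add.1 hA with h | h
        · rw [Multiset.mem_singleton.1 h]; exact (triv_om1 hgG).1
        · obtain ⟨i, _, hi⟩ := Multiset.mem_sum.1 h
          rw [Multiset.eq_of_mem_replicate hi]; exact (triv_om1 (heG i)).1
      · rw [Multiset.sum_add, Multiset.sum_singleton, Multiset.sum_sum, hW, smul_add,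
          Finset.smul_sum, Multiset.nsmul_singleton, triv, hog]
        congr 1
        refine Finset.sum_congr rfl fun i _ => ?_
        rw [Multiset.sum_replicate, triv, hoe, Multiset.nsmul_replicate, Multiset.nsmul_replicate,
          mul_comm]
    have hlt : p < 1 + r * (p - 1) := by
      have : 2 * (p - 1) ≤ r * (p - 1) := Nat.mul_le_mul_right _ hr
      omega
    obtain ⟨t, ht, _⟩ := delta_set_of_two hl1 hl2 hlt
    exact ⟨t, ht⟩
  · rintro t ⟨B, hB, _, x, ⟨l1, c1, h1, s1⟩, y, ⟨l2, c2, h2, s2⟩, hxy, ht, _⟩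
    obtain ⟨k1, e1⟩ := hlen l1 h1
    obtain ⟨k2, e2⟩ := hlen l2 h2
    rw [s1, c1] at e1
    rw [s2, c2] at e2
    subst ht
    have h3 : x + k1 * (r - 1) = y + k2 * (r - 1) := by
      refine Nat.eq_of_mul_eq_mul_left hp.pos ?_
      linarith [e1.symm.trans e2]
    have h4 : k2 < k1 := by
      by_contra hcon
      have := Nat.mul_le_mul_right (r - 1) (not_lt.1 hcon)
      omega
    have h5 : (k2 + 1) * (r - 1) ≤ k1 * (r - 1) := Nat.mul_le_mul_right _ h4
    rw [add_mul, one_mul] at h5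
    omega

lemma exists_basis_aux {p : ℕ} [Fact p.Prime] {H : Type*} [AddCommGroup H] [Finite H]
    [Module (ZMod p) H] : ∃ k, Nat.card H = p ^ k ∧ ∃ e : Fin k → H,
    ∀ c : Fin k → ℕ, ∑ i, c i • e i = 0 → ∀ i, p ∣ c i := by
  have hfin : Module.Finite (ZMod p) H := Module.Finite.of_finite
  refine ⟨Module.finrank (ZMod p) H, ?_, ⇑(Module.finBasis (ZMod p) H), fun c hc i => ?_⟩
  · rw [Module.natCard_eq_pow_finrank (K := ZMod p) (V := H), Nat.card_zmod]
  · have h1 : ∑ i, ((c i : ZMod p)) • (Module.finBasis (ZMod p) H) i = 0 := by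
      rw [← hc]
      exact Finset.sum_congr rfl fun i _ => Nat.cast_smul_eq_nsmul _ _ _
    have h2 := Fintype.linearIndependent_iff.1 (Module.finBasis (ZMod p) H).linearIndependent
      (fun i => (c i : ZMod p)) h1 i
    exact (ZMod.natCast_eq_zero_iff _ _).1 h2

lemma exists_basis {p : ℕ} (hp : p.Prime) : ∃ e : Fin (pRank G p) → G, (∀ i, p • e i = 0) ∧
    ∀ c : Fin (pRank G p) → ℕ, ∑ i, c i • e i = 0 → ∀ i, p ∣ c i := by
  have : Fact p.Prime := ⟨hp⟩
  let H := (nsmulAddMonoidHom (α := G) p).ker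
  have hH : ∀ x : H, p • x = 0 := fun x => Subtype.ext x.2
  let _ : Module (ZMod p) H := AddCommGroup.zmodModule hH
  obtain ⟨k, hk, e, he⟩ := exists_basis_aux (p := p) (H := H)
  have hrk : pRank G p = k := by
    have : Nat.card {x : G // p • x = 0} = Nat.card H := rfl
    rw [pRank, this, hk, Nat.log_pow hp.one_lt]
  rw [hrk]
  refine ⟨fun i => (e i : G), fun i => congrArg Subtype.val (hH (e i)), fun c hc => he c ?_⟩
  apply Subtype.ext
  rw [AddSubgroup.coe_zero, ← hc, AddSubgroup.val_finsetSum]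
  rfl

lemma rank_bdd : BddAbove {r : ℕ | ∃ p : ℕ, p.Prime ∧ r = pRank G p} := by
  refine ⟨Nat.card G, ?_⟩
  rintro r ⟨p, _, rfl⟩
  exact (Nat.log_le_self _ _).trans (Nat.card_le_card_of_injective _ Subtype.val_injective)

lemma rank_le_delta (hr : 2 ≤ rankG G) : rankG G - 1 ≤ sSup (DeltaStar G) := by
  have hmem : rankG G ∈ {r : ℕ | ∃ p : ℕ, p.Prime ∧ r = pRank G p} :=
    Nat.sSup_mem ⟨_, 2, Nat.prime_two, rfl⟩ rank_bdd
  obtain ⟨p, hp, hrp⟩ := hmem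
  rw [hrp] at hr ⊢
  obtain ⟨e, he1, he2⟩ := exists_basis (G := G) hp
  obtain ⟨G₁, h1, h2⟩ := example_bound hp hr e he1 he2
  have hb : BddAbove (DeltaStar G) := by
    refine Set.Finite.bddAbove (Set.Finite.subset
      (Set.finite_range fun G₀ : Set G => sInf (DeltaSet G₀)) ?_)
    rintro t ⟨G₀, _, rfl⟩
    exact ⟨G₀, rfl⟩
  exact (h2 _ (Nat.sInf_mem h1)).trans (le_csSup hb ⟨G₁, h1, rfl⟩)

end Aux6

/-- If `exp(G)` is odd, `r(G) ≥ exp(G) − 1`, and `G₀` is a minimal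
non-half-factorial LCN-set with `min Δ(G₀) = max Δ*(G)`, then some `g ∈ G₀` has
`G₀ \ {g}` independent. -/
theorem stmt_19 {G : Type*} [AddCommGroup G] [Fintype G] (G₀ : Set G)
    (hodd : Odd (AddMonoid.exponent G))
    (hr : AddMonoid.exponent G - 1 ≤ rankG G)
    (hmin : IsMinNonHalfFactorial G₀) (hLCN : IsLCNSet G₀)
    (hmax : sInf (DeltaSet G₀) = sSup (DeltaStar G)) :
    ∃ g ∈ G₀, IsIndependentSet (G₀ \ {g}) := by
  classical
  lift G₀ to Finset G using G₀.toFinite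
  have hG := good_of hmin hLCN
  obtain ⟨U, hU⟩ := exists_omG hmin hLCN
  have hn3 : 3 ≤ AddMonoid.exponent G := by
    obtain ⟨x, hx⟩ := Multiset.exists_mem_of_ne_zero hU.1.2.1
    have h1 := omG_count_lt hU x
    have h2 := Multiset.count_pos.2 hx
    have h3 := Nat.le_of_dvd
      (Nat.pos_of_ne_zero (AddMonoid.exponent_ne_zero_of_finite (G := G)))
      (AddMonoid.addOrder_dvd_exponent x)
    obtain ⟨k, hk⟩ := hodd
    omega
  have hlow := rank_le_delta (G := G) (by omega)
  rw [← hmax] at hlow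
  have hd : AddMonoid.exponent G ≤ sInf (DeltaSet (G₀ : Set G)) + 2 := by omega
  obtain ⟨p, hp, hb⟩ := hG.rank_bound hd hU
  have hb2 : pRank G p ≤ rankG G := le_csSup rank_bdd ⟨p, hp, rfl⟩
  exact hG.indep hd (by omega) hodd hU
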